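/- arXiv:2103.10598 — 5 statements merged into one kernel-verified Lean document; each statement's English description precedes it below -/
import Mathlib

section
/- Let G be a finite group. Then λ(G) = |G| − 2 if and only if G is isomorphic to C_3 or S_3, where λ(G) is the number of maximal cyclic subgroups. -/
/-- A subgroup is maximal cyclic if it is cyclic and not properly contained
in any cyclic subgroup. -/
def IsMaximalCyclic {G : Type*} [Group G] (H : Subgroup G) : Prop :=
  IsCyclic H ∧ ∀ K : Subgroup G, IsCyclic K → H ≤ K → H = K

/-- `lambdaCover G` is the number of maximal cyclic subgroups of `G`. -/
noncomputable def lambdaCover (G : Type*) [Group G] : ℕ :=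
  Nat.card {H : Subgroup G // IsMaximalCyclic H}

def PP (G : Type*) [Group G] : Prop :=
  ∃ x : G, x ≠ 1 ∧ x ^ 3 = 1 ∧ ∀ y : G, y ^ 2 = 1 ∨ y = x ∨ y = x⁻¹

theorem mem_zp2 {G : Type*} [Group G] {z y : G} (hz : z ^ 2 = 1)
    (h : y ∈ Subgroup.zpowers z) : y = 1 ∨ y = z := by
  obtain ⟨k, rfl⟩ := Subgroup.mem_zpowers_iff.1 h
  have hz' : z ^ (2 : ℤ) = 1 := by exact_mod_cast hz
  rcases Int.even_or_odd' k with ⟨m, rfl | rfl⟩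
  · left; rw [zpow_mul, hz', one_zpow]
  · right; rw [zpow_add, zpow_mul, hz', one_zpow, one_mul, zpow_one]

theorem maxcyc_gen {G : Type*} [Group G] {H : Subgroup G} (h : IsCyclic H) :
    ∃ g : G, Subgroup.zpowers g = H :=
  (Subgroup.isCyclic_iff_exists_zpowers_eq_top H).1 h

theorem PP_of_lambda {G : Type*} [Group G] [Finite G]
    (h : Nat.card G = lambdaCover G + 2) : PP G := by
  classical
  have hne : Nontrivial G := Finite.one_lt_card_iff_nontrivial.1 (by omega)
  choose f hf using fun H : {H : Subgroup G // IsMaximalCyclic H} => maxcyc_gen H.2.1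
  have finj : Function.Injective f := by
    intro H K hHK
    apply Subtype.ext
    rw [← hf H, ← hf K, hHK]
  have hc : (Set.range f)ᶜ.ncard = 2 := by
    have h1 := Set.ncard_add_ncard_compl (Set.range f)
    have h2 : (Set.range f).ncard = lambdaCover G := by
      rw [← Nat.card_coe_set_eq, Nat.card_range_of_injective finj]; rfl
    omega
  have h1 : (1 : G) ∈ (Set.range f)ᶜ := by
    rintro ⟨H, hH⟩
    have h3 := hf H
    rw [hH, Subgroup.zpowers_one_eq_bot] at h3
    obtain ⟨y, hy⟩ := exists_ne (1 : G)
    have := H.2.2 (Subgroup.zpowers y) inferInstance (by rw [← h3]; exact bot_le)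
    rw [← h3] at this
    exact hy (Subgroup.zpowers_eq_bot.1 this.symm)
  obtain ⟨v, hv1, hv⟩ : ∃ v : G, v ≠ 1 ∧ (Set.range f)ᶜ = {1, v} := by
    obtain ⟨a, b, hab, he⟩ := Set.ncard_eq_two.1 hc
    rw [he] at h1 ⊢
    rcases h1 with h1 | h1
    · exact ⟨b, by rw [h1]; exact hab.symm, by rw [h1]⟩
    · have h1 : 1 = b := h1
      exact ⟨a, by rw [h1]; exact hab, by rw [h1, Set.pair_comm]⟩
  have hvr : v ∉ Set.range f := by
    have : v ∈ (Set.range f)ᶜ := by rw [hv]; simp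
    exact this
  have key : ∀ y : G, y ≠ 1 → y ≠ v → ∃ H, f H = y := by
    intro y h1 h2
    by_contra hcon
    have : y ∈ (Set.range f)ᶜ := hcon
    rw [hv] at this
    rcases this with h | h
    · exact h1 h
    · exact h2 h
  have hinv : ∀ y : G, y ^ 2 = 1 ∨ y = v ∨ y = v⁻¹ := by
    intro y
    by_contra! hcon
    obtain ⟨ha, hb, hd⟩ := hcon
    have hy1 : y ≠ 1 := by rintro rfl; simp at ha
    obtain ⟨H, hH⟩ := key y hy1 hb
    obtain ⟨K, hK⟩ := key y⁻¹ (by simpa using hy1) (by rintro rfl; simp at hd)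
    have hHK : H = K := by
      apply Subtype.ext
      rw [← hf H, ← hf K, hH, hK, Subgroup.zpowers_inv]
    rw [hHK, hK] at hH
    apply ha
    rw [pow_two]
    nth_rw 1 [← hH]
    simp
  have hv2 : v ^ 2 ≠ 1 := by
    intro hv2
    have hall : ∀ y : G, y ^ 2 = 1 := by
      intro y
      rcases hinv y with h | rfl | rfl
      · exact h
      · exact hv2
      · rw [inv_pow, hv2, inv_one]
    have hm : IsMaximalCyclic (Subgroup.zpowers v) := by
      refine ⟨inferInstance, fun K hK hle => ?_⟩
      obtain ⟨z, rfl⟩ := maxcyc_gen hK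
      rcases mem_zp2 (hall z) (hle (Subgroup.mem_zpowers v)) with h | h
      · exact absurd h hv1
      · rw [h]
    have h4 := hf ⟨_, hm⟩
    have h5 : v ∈ Subgroup.zpowers (f ⟨_, hm⟩) := by rw [h4]; exact Subgroup.mem_zpowers v
    rcases mem_zp2 (hall _) h5 with h | h
    · exact hv1 h
    · exact hvr ⟨_, h.symm⟩
  refine ⟨v, hv1, ?_, hinv⟩
  rcases hinv (v ^ 2) with h | h | h
  · exfalso
    obtain ⟨H, hH⟩ := key (v ^ 2) hv2 (by
      intro h; apply hv1; rw [pow_two] at h; simpa using h)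
    have h6 := hf H
    rw [hH] at h6
    have h7 := H.2.2 (Subgroup.zpowers v) inferInstance (by
      rw [← h6, Subgroup.zpowers_le]; exact Subgroup.pow_mem _ (Subgroup.mem_zpowers v) 2)
    have h8 : v ∈ Subgroup.zpowers (v ^ 2) := by
      rw [h6, h7]; exact Subgroup.mem_zpowers v
    rcases mem_zp2 h h8 with h | h
    · exact hv1 h
    · apply hv1; rw [pow_two] at h; simpa using h.symm
  · exfalso; apply hv1; rw [pow_two] at h; simpa using h
  · rw [pow_succ, h]; simp

theorem lambda_of_PP {G : Type*} [Group G] [Finite G] (h : PP G) :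
    Nat.card G = lambdaCover G + 2 := by
  classical
  obtain ⟨x, hx1, hx3, hall⟩ := h
  have hxi : x ≠ x⁻¹ := by
    intro h
    have : x ^ 2 = 1 := by rw [pow_two]; nth_rw 1 [h]; simp
    rw [pow_succ, this, one_mul] at hx3
    exact hx1 hx3
  have hord : ∀ y : G, y ≠ 1 → (y ^ 2 = 1 ∧ orderOf y = 2) ∨ ((y = x ∨ y = x⁻¹) ∧ orderOf y = 3) := by
    intro y hy
    rcases hall y with h | rfl | rfl
    · exact Or.inl ⟨h, orderOf_eq_prime h hy⟩
    · exact Or.inr ⟨Or.inl rfl, orderOf_eq_prime hx3 hx1⟩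
    · exact Or.inr ⟨Or.inr rfl, by rw [orderOf_inv]; exact orderOf_eq_prime hx3 hx1⟩
  have hpr : ∀ y : G, y ≠ 1 → (orderOf y).Prime := by
    intro y hy
    rcases hord y hy with ⟨_, h⟩ | ⟨_, h⟩ <;> rw [h] <;> norm_num
  have hmax : ∀ y : G, y ≠ 1 → IsMaximalCyclic (Subgroup.zpowers y) := by
    intro y hy
    refine ⟨inferInstance, fun K hK hle => ?_⟩
    obtain ⟨z, rfl⟩ := maxcyc_gen hK
    have hz : z ≠ 1 := by
      rintro rfl
      rw [Subgroup.zpowers_one_eq_bot, le_bot_iff, Subgroup.zpowers_eq_bot] at hle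
      exact hy hle
    apply Subgroup.eq_of_le_of_card_ge hle
    have hd := Subgroup.card_dvd_of_le hle
    rw [Nat.card_zpowers, Nat.card_zpowers] at *
    exact ((Nat.prime_dvd_prime_iff_eq (hpr y hy) (hpr z hz)).1 hd).ge
  let F : {y : G // y ∈ ({1, x⁻¹} : Set G)ᶜ} → {H : Subgroup G // IsMaximalCyclic H} :=
    fun y => ⟨Subgroup.zpowers y.1, hmax y.1 (fun h => y.2 (Or.inl h))⟩
  have hF : Function.Bijective F := by
    constructor
    · rintro ⟨y, hy⟩ ⟨z, hz⟩ hyz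
      have hyz : Subgroup.zpowers y = Subgroup.zpowers z := congrArg Subtype.val hyz
      have hy1 : y ≠ 1 := fun h => hy (Or.inl h)
      have hz1 : z ≠ 1 := fun h => hz (Or.inl h)
      have hyx : y ≠ x⁻¹ := fun h => hy (Or.inr h)
      have hzx : z ≠ x⁻¹ := fun h => hz (Or.inr h)
      apply Subtype.ext
      show y = z
      have ho : orderOf y = orderOf z := by
        rw [← Nat.card_zpowers, hyz, Nat.card_zpowers]
      rcases hord y hy1 with ⟨h, h'⟩ | ⟨h, h'⟩ <;> rcases hord z hz1 with ⟨k, k'⟩ | ⟨k, k'⟩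
      · have : y ∈ Subgroup.zpowers z := by rw [← hyz]; exact Subgroup.mem_zpowers y
        rcases mem_zp2 k this with h | h
        · exact absurd h hy1
        · exact h
      · omega
      · omega
      · rw [h.resolve_right hyx, k.resolve_right hzx]
    · rintro ⟨H, hH⟩
      obtain ⟨y, rfl⟩ := maxcyc_gen hH.1
      have hy : y ≠ 1 := by
        rintro rfl
        have := hH.2 (Subgroup.zpowers x) inferInstance (by simp)
        rw [Subgroup.zpowers_one_eq_bot] at this
        exact hx1 (Subgroup.zpowers_eq_bot.1 this.symm)
      by_cases hyx : y = x⁻¹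
      · refine ⟨⟨x, ?_⟩, ?_⟩
        · rintro (h | h)
          · exact hx1 h
          · exact hxi h
        · apply Subtype.ext
          show Subgroup.zpowers x = Subgroup.zpowers y
          rw [hyx, Subgroup.zpowers_inv]
      · refine ⟨⟨y, ?_⟩, rfl⟩
        rintro (h | h)
        · exact hy h
        · exact hyx h
  have h1 := Set.ncard_add_ncard_compl ({1, x⁻¹} : Set G)
  have h2 : ({1, x⁻¹} : Set G).ncard = 2 := Set.ncard_pair (by
    intro h; exact hx1 (by simpa using h.symm))
  have h3 : ({1, x⁻¹} : Set G)ᶜ.ncard = lambdaCover G := by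
    rw [← Nat.card_coe_set_eq]
    exact Nat.card_eq_of_bijective F hF
  omega

theorem PP_of_equiv {G K : Type*} [Group G] [Group K] (e : G ≃* K) (h : PP K) : PP G := by
  obtain ⟨x, hx1, hx3, hall⟩ := h
  refine ⟨e.symm x, by simpa using hx1, by rw [← map_pow, hx3, map_one], fun y => ?_⟩
  rcases hall (e y) with h | h | h
  · left
    apply e.injective
    rw [map_pow, h, map_one]
  · right; left; rw [← h]; simp
  · right; right; rw [← map_inv, ← h]; simp

theorem iso_of_PP {G : Type*} [Group G] [Finite G] (h : PP G) :
    Nonempty (G ≃* Multiplicative (ZMod 3)) ∨ Nonempty (G ≃* Equiv.Perm (Fin 3)) := by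
  classical
  obtain ⟨x, hx1, hx3, hall⟩ := h
  have hox : orderOf x = 3 := orderOf_eq_prime hx3 hx1
  have hx2 : x ^ 2 ≠ 1 := by
    intro h; rw [pow_succ, h, one_mul] at hx3; exact hx1 hx3
  have hcard : Nat.card (Subgroup.zpowers x) = 3 := by rw [Nat.card_zpowers, hox]
  have hcen : ∀ b : G, b * x = x * b → b ∈ Subgroup.zpowers x := by
    intro b hb
    have hxm := Subgroup.mem_zpowers x
    rcases hall b with h | rfl | rfl
    · rcases hall (b * x) with k | k | k
      · exfalso
        have hc : Commute b x := hb
        rw [hc.mul_pow, h, one_mul] at k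
        exact hx2 k
      · have : b = 1 := by simpa using k
        rw [this]; exact one_mem _
      · have : b = x⁻¹ * x⁻¹ := eq_mul_inv_of_mul_eq k
        rw [this]
        exact mul_mem (inv_mem hxm) (inv_mem hxm)
    · exact hxm
    · exact inv_mem hxm
  have hnot : ∀ b : G, b ∉ Subgroup.zpowers x → b ^ 2 = 1 ∧ b * x * b⁻¹ = x⁻¹ := by
    intro b hb
    have hxm := Subgroup.mem_zpowers x
    constructor
    · rcases hall b with h | rfl | rfl
      · exact h
      · exact absurd hxm hb
      · exact absurd (inv_mem hxm) hb
    · rcases hall (b * x * b⁻¹) with h | h | h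
      · rw [conj_pow] at h
        exact absurd (conj_eq_one_iff.1 h) hx2
      · exact absurd (hcen b (by nth_rw 2 [← h]; group)) hb
      · exact h
  by_cases htop : ∀ b : G, b ∈ Subgroup.zpowers x
  · left
    have : IsCyclic G := ⟨x, htop⟩
    have hG : Nat.card G = 3 := by
      rw [← orderOf_eq_card_of_forall_mem_zpowers htop, hox]
    exact ⟨mulEquivOfCyclicCardEq (by rw [hG]; simp)⟩
  · right
    push Not at htop
    obtain ⟨a, ha⟩ := htop
    obtain ⟨ha2, hax⟩ := hnot a ha
    have ha1 : a ≠ 1 := by rintro rfl; exact ha (one_mem _)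
    have hind : (Subgroup.zpowers x).index = 2 := by
      rw [Subgroup.index_eq_two_iff]
      refine ⟨a, fun b => ?_⟩
      by_cases hb : b ∈ Subgroup.zpowers x
      · right
        refine ⟨hb, fun h => ha ?_⟩
        exact (Subgroup.mul_mem_cancel_left _ hb).1 h
      · left
        refine ⟨hcen _ ?_, hb⟩
        obtain ⟨_, hbx⟩ := hnot b hb
        have h1 : b * a * x * (b * a)⁻¹ = x := by
          calc b * a * x * (b * a)⁻¹ = b * (a * x * a⁻¹) * b⁻¹ := by group
            _ = (b * x * b⁻¹)⁻¹ := by rw [hax]; group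
            _ = x := by rw [hbx, inv_inv]
        exact mul_inv_eq_iff_eq_mul.1 h1
    have hG : Nat.card G = 6 := by
      rw [← Subgroup.card_mul_index (Subgroup.zpowers x), hcard, hind]
    have hA : Nat.card (Subgroup.zpowers a) = 2 := by
      rw [Nat.card_zpowers, orderOf_eq_prime ha2 ha1]
    have hq : Nat.card (G ⧸ Subgroup.zpowers a) = 3 := by
      have := Subgroup.card_mul_index (Subgroup.zpowers a)
      rw [hA, hG] at this
      have h' : (Subgroup.zpowers a).index = 3 := by omega
      exact h'
    have hinj : Function.Injective (MulAction.toPermHom G (G ⧸ Subgroup.zpowers a)) := by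
      rw [← MonoidHom.ker_eq_bot_iff, ← Subgroup.normalCore_eq_ker, eq_bot_iff]
      intro g hg
      rcases mem_zp2 ha2 (Subgroup.normalCore_le _ hg) with h | h
      · exact h
      · exfalso
        subst h
        have := hg x
        rcases mem_zp2 ha2 this with h | h
        · exact ha1 (conj_eq_one_iff.1 h)
        · exact ha (hcen g (mul_inv_eq_iff_eq_mul.1 h).symm)
    let e : (G ⧸ Subgroup.zpowers a) ≃ Fin 3 := Finite.equivFinOfCardEq hq
    let φ : G →* Equiv.Perm (Fin 3) :=
      (e.permCongrHom.toMonoidHom).comp (MulAction.toPermHom G (G ⧸ Subgroup.zpowers a))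
    have hφ : Function.Injective φ := e.permCongrHom.injective.comp hinj
    have hb : Function.Bijective φ := by
      rw [Nat.bijective_iff_injective_and_card]
      refine ⟨hφ, ?_⟩
      rw [hG, Nat.card_perm, Nat.card_fin]
      rfl
    exact ⟨MulEquiv.ofBijective φ hb⟩

theorem PP_Z3 : PP (Multiplicative (ZMod 3)) :=
  ⟨Multiplicative.ofAdd 1, by decide, by decide, by decide⟩

theorem PP_S3 : PP (Equiv.Perm (Fin 3)) :=
  ⟨finRotate 3, by decide, by decide, by decide⟩

theorem lambda_eq_card_sub_two_iff {G : Type*} [Group G] [Finite G] :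
    Nat.card G = lambdaCover G + 2 ↔
      (Nonempty (G ≃* Multiplicative (ZMod 3)) ∨
       Nonempty (G ≃* Equiv.Perm (Fin 3))) := by
  constructor
  · intro h
    exact iso_of_PP (PP_of_lambda h)
  · rintro (⟨⟨e⟩⟩ | ⟨⟨e⟩⟩)
    · exact lambda_of_PP (PP_of_equiv e PP_Z3)
    · exact lambda_of_PP (PP_of_equiv e PP_S3)
end

section
/- Let G be a finite group. Then λ(G) = |G| − 4 if and only if G is isomorphic to one of: C_5, D_10 (dihedral of order 10), C_4 × C_2, or D_8 × C_2. -/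
namespace LC

theorem card_of_transversal {G : Type*} [Group G] (S : Finset G)
    (h1 : ∀ g : G, ∃ s ∈ S, g ∈ Subgroup.zpowers s)
    (h2 : ∀ s ∈ S, ∀ t ∈ S, s ∈ Subgroup.zpowers t → s = t) :
    lambdaCover G = S.card := by
  unfold lambdaCover
  have hmax : ∀ s ∈ S, IsMaximalCyclic (Subgroup.zpowers s) := by
    intro s hs
    refine ⟨inferInstance, ?_⟩
    intro K hK hle
    obtain ⟨y, rfl⟩ := (Subgroup.isCyclic_iff_exists_zpowers_eq_top K).1 hK
    obtain ⟨s', hs', hy⟩ := h1 y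
    have hle' : Subgroup.zpowers y ≤ Subgroup.zpowers s' := by simpa using hy
    have := h2 s hs s' hs' (hle' (hle (Subgroup.mem_zpowers s)))
    subst this
    exact le_antisymm hle hle'
  have : Nat.card S = Nat.card {H : Subgroup G // IsMaximalCyclic H} := by
    apply Nat.card_congr
    refine Equiv.ofBijective (fun s => ⟨Subgroup.zpowers s.1, hmax s.1 s.2⟩) ⟨?_, ?_⟩
    · intro s t h
      apply Subtype.ext
      apply h2 s.1 s.2 t.1 t.2
      have : Subgroup.zpowers s.1 = Subgroup.zpowers t.1 := congrArg Subtype.val h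
      rw [← this]; exact Subgroup.mem_zpowers _
    · rintro ⟨H, hc, hm⟩
      obtain ⟨y, rfl⟩ := (Subgroup.isCyclic_iff_exists_zpowers_eq_top H).1 hc
      obtain ⟨s, hs, hy⟩ := h1 y
      refine ⟨⟨s, hs⟩, Subtype.ext ?_⟩
      exact (hm _ inferInstance (by simpa using hy)).symm
  rw [← this]; simp

theorem transversal_exists {G : Type*} [Group G] [Finite G] :
    ∃ S : Finset G, S.card = lambdaCover G ∧
    (∀ g : G, ∃ s ∈ S, g ∈ Subgroup.zpowers s) ∧
    (∀ s ∈ S, ∀ t ∈ S, s ∈ Subgroup.zpowers t → s = t) := by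
  classical
  have := Fintype.ofFinite G
  have hg : ∀ H : {H : Subgroup G // IsMaximalCyclic H}, ∃ g : G, Subgroup.zpowers g = H.1 :=
    fun H => (Subgroup.isCyclic_iff_exists_zpowers_eq_top H.1).1 H.2.1
  choose f hf using hg
  have finj : Function.Injective f := by
    intro a b h
    apply Subtype.ext; rw [← hf a, ← hf b, h]
  have := Fintype.ofFinite {H : Subgroup G // IsMaximalCyclic H}
  have P1 : ∀ g : G, ∃ s ∈ (Finset.univ.image f), g ∈ Subgroup.zpowers s := by
    intro g
    obtain ⟨K, hle, hK⟩ := (Set.toFinite {K : Subgroup G | IsCyclic K}).exists_le_maximal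
      (show Subgroup.zpowers g ∈ {K : Subgroup G | IsCyclic K} from (inferInstance : IsCyclic (Subgroup.zpowers g)))
    have hm : IsMaximalCyclic K := ⟨hK.1, fun L hL h => le_antisymm h (hK.2 hL h)⟩
    refine ⟨f ⟨K, hm⟩, by simp, ?_⟩
    rw [hf]; exact hle (Subgroup.mem_zpowers g)
  have P2 : ∀ s ∈ (Finset.univ.image f), ∀ t ∈ (Finset.univ.image f), s ∈ Subgroup.zpowers t → s = t := by
    intro s hs t ht hst
    simp only [Finset.mem_image, Finset.mem_univ, true_and] at hs ht
    obtain ⟨A, rfl⟩ := hs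
    obtain ⟨B, rfl⟩ := ht
    congr 1
    apply Subtype.ext
    apply A.2.2 _ B.2.1
    rw [← hf A, ← hf B]
    simpa using hst
  exact ⟨_, (card_of_transversal _ P1 P2).symm, P1, P2⟩

/-- transversal conditions move along isomorphisms -/
theorem back {G H : Type*} [Group G] [Group H] [Fintype H] [DecidableEq H] (e : G ≃* H) (S : Finset H) (n : ℕ)
    (hn : ∀ g : H, g ^ (n+1) = 1)
    (h1 : ∀ g : H, ∃ s ∈ S, ∃ k : Fin (n+1), g = s ^ k.val)
    (h2 : ∀ s ∈ S, ∀ t ∈ S, ∀ k : Fin (n+1), s = t ^ k.val → s = t)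
    (hc : Fintype.card H = S.card + 4) :
    Nat.card G = lambdaCover G + 4 := by
  have : lambdaCover G = S.card := by
    have := card_of_transversal (G := G) (S.map e.symm.toEquiv.toEmbedding) ?_ ?_
    · simpa using this
    · intro g
      obtain ⟨s, hs, k, hk⟩ := h1 (e g)
      refine ⟨e.symm s, by simpa using hs, k.val, ?_⟩
      simp only [zpow_natCast]
      rw [← map_pow, ← hk]; simp
    · intro s hs t ht hst
      simp only [Finset.mem_map, MulEquiv.toEquiv_eq_coe, Equiv.coe_toEmbedding, EquivLike.coe_coe] at hs ht
      obtain ⟨s, hs, rfl⟩ := hs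
      obtain ⟨t, ht, rfl⟩ := ht
      obtain ⟨k, hk⟩ := hst
      congr 1
      have hk' : t ^ k = s := by
        apply e.symm.injective
        simpa using hk
      refine h2 s hs t ht ⟨(k % ((n+1 : ℕ) : ℤ)).toNat, ?_⟩ ?_
      · have := Int.emod_lt_of_pos k (show (0:ℤ) < ((n+1 : ℕ) : ℤ) by positivity)
        have := Int.emod_nonneg k (show ((n+1 : ℕ) : ℤ) ≠ 0 by positivity)
        omega
      · have h0 := Int.emod_nonneg k (show ((n+1 : ℕ) : ℤ) ≠ 0 by positivity)
        rw [← hk', ← zpow_natCast]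
        simp only [Int.toNat_of_nonneg h0]
        conv_lhs => rw [← Int.mul_ediv_add_emod k ((n+1 : ℕ) : ℤ), zpow_add, zpow_mul, zpow_natCast, hn, one_zpow, one_mul]
  rw [this, ← hc, Nat.card_congr e.toEquiv, Nat.card_eq_fintype_card]

theorem back1 {G : Type*} [Group G] (e : G ≃* Multiplicative (ZMod 5)) : Nat.card G = lambdaCover G + 4 := by
  refine back e {Multiplicative.ofAdd 1} 4 ?_ ?_ ?_ ?_ <;> decide

theorem back2 {G : Type*} [Group G] (e : G ≃* DihedralGroup 5) : Nat.card G = lambdaCover G + 4 := by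
  refine back e (insert (DihedralGroup.r 1) (Finset.univ.image DihedralGroup.sr)) 9 ?_ ?_ ?_ ?_ <;> decide +kernel

theorem back3 {G : Type*} [Group G] (e : G ≃* Multiplicative (ZMod 4 × ZMod 2)) : Nat.card G = lambdaCover G + 4 := by
  refine back e {Multiplicative.ofAdd (1,0), Multiplicative.ofAdd (1,1), Multiplicative.ofAdd (0,1), Multiplicative.ofAdd (2,1)} 3 ?_ ?_ ?_ ?_ <;> decide +kernel

theorem back4 {G : Type*} [Group G] (e : G ≃* DihedralGroup 4 × Multiplicative (ZMod 2)) :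
    Nat.card G = lambdaCover G + 4 := by
  refine back e (Finset.univ \ {(DihedralGroup.r 0, 1), (DihedralGroup.r 2, 1), (DihedralGroup.r 3, 1),
    (DihedralGroup.r 3, Multiplicative.ofAdd 1)}) 3 ?_ ?_ ?_ ?_ <;> decide +kernel

end LC

namespace LC

theorem zmod_hom {G : Type*} [Group G] (n : ℕ) (x : G) (hx : x ^ n = 1) :
    ∃ f : Multiplicative (ZMod n) →* G, ∀ k : ℤ, f (Multiplicative.ofAdd (k : ZMod n)) = x ^ k := by
  let F : ZMod n →+ Additive G := ZMod.lift n ⟨zmultiplesHom (Additive G) (Additive.ofMul x), by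
    simp [← ofMul_pow, hx]⟩
  refine ⟨AddMonoidHom.toMultiplicativeLeft F, ?_⟩
  intro k
  simp [F]

theorem dihedral_hom {G : Type*} [Group G] (n : ℕ) (x t : G) (hx : x ^ n = 1) (ht : t * t = 1)
    (h : t * x * t = x⁻¹) : ∃ f : DihedralGroup n →* G, ∀ k : ℤ, f (DihedralGroup.r (k : ZMod n)) = x ^ k ∧
      f (DihedralGroup.sr (k : ZMod n)) = t * x ^ k := by
  obtain ⟨P, hP⟩ := zmod_hom n x hx
  have ht' : t⁻¹ = t := inv_eq_of_mul_eq_one_right ht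
  have hc : ∀ k : ℤ, x ^ k * t = t * x ^ (-k) := by
    intro k
    have : (t * x * t⁻¹) ^ k = t * x ^ k * t⁻¹ := conj_zpow
    rw [ht', h] at this
    have h3 : x ^ (-k) = t * x ^ k * t := by rw [← this]; simp
    rw [h3]
    simp only [← mul_assoc, ht, one_mul]
  let f : DihedralGroup n → G := fun d => match d with
    | DihedralGroup.r i => P (Multiplicative.ofAdd i)
    | DihedralGroup.sr i => t * P (Multiplicative.ofAdd i)
  have hf1 : ∀ k : ℤ, f (DihedralGroup.r (k : ZMod n)) = x ^ k := fun k => hP k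
  have hf2 : ∀ k : ℤ, f (DihedralGroup.sr (k : ZMod n)) = t * x ^ k := fun k => by
    rw [← hP k]
  have hmul : ∀ a b, f (a * b) = f a * f b := by
    rintro (i | i) (j | j) <;> obtain ⟨i, rfl⟩ := ZMod.intCast_surjective i <;>
      obtain ⟨j, rfl⟩ := ZMod.intCast_surjective j
    · rw [DihedralGroup.r_mul_r, ← Int.cast_add]; simp only [hf1, hf2, zpow_add]
    · rw [DihedralGroup.r_mul_sr, ← Int.cast_sub]; simp only [hf1, hf2]
      rw [← mul_assoc, hc, mul_assoc, ← zpow_add]; congr 2; ring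
    · rw [DihedralGroup.sr_mul_r, ← Int.cast_add]; simp only [hf1, hf2, zpow_add, mul_assoc]
    · rw [DihedralGroup.sr_mul_sr, ← Int.cast_sub]; simp only [hf1, hf2]
      rw [mul_assoc, ← mul_assoc (x ^ i), hc, mul_assoc, ← mul_assoc, ht, one_mul, ← zpow_add]; congr 1; ring
  exact ⟨MonoidHom.mk' f hmul, fun k => ⟨hf1 k, hf2 k⟩⟩

theorem zmod_inj {G : Type*} [Group G] (n : ℕ) (x : G) (hx : orderOf x = n) (k : ℤ) (h : x ^ k = 1) :
    (k : ZMod n) = 0 := by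
  rw [ZMod.intCast_zmod_eq_zero_iff_dvd, ← hx]
  exact orderOf_dvd_iff_zpow_eq_one.2 h

theorem zmod_hom_inj {G : Type*} [Group G] (n : ℕ) (x : G) (hx : orderOf x = n) :
    ∃ f : Multiplicative (ZMod n) →* G, Function.Injective f ∧
      ∀ g, g ∈ f.range ↔ g ∈ Subgroup.zpowers x := by
  obtain ⟨f, hf⟩ := zmod_hom n x (by rw [← hx, pow_orderOf_eq_one])
  refine ⟨f, ?_, ?_⟩
  · rw [injective_iff_map_eq_one]
    intro a ha
    obtain ⟨i, hi⟩ := ZMod.intCast_surjective a.toAdd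
    have : a = Multiplicative.ofAdd (i : ZMod n) := by rw [hi]; rfl
    rw [this, hf] at ha
    rw [this, zmod_inj n x hx i ha]; rfl
  · intro g
    constructor
    · rintro ⟨a, rfl⟩
      obtain ⟨i, hi⟩ := ZMod.intCast_surjective a.toAdd
      have : a = Multiplicative.ofAdd (i : ZMod n) := by rw [hi]; rfl
      rw [this, hf]; exact ⟨i, rfl⟩
    · rintro ⟨k, rfl⟩
      exact ⟨_, hf k⟩

theorem dihedral_hom_inj {G : Type*} [Group G] (n : ℕ) (x t : G) (hx : orderOf x = n) (ht : t * t = 1)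
    (h : t * x * t = x⁻¹) (hn : t ∉ Subgroup.zpowers x) :
    ∃ f : DihedralGroup n →* G, Function.Injective f ∧
      ∀ g, g ∈ f.range ↔ (g ∈ Subgroup.zpowers x ∨ t * g ∈ Subgroup.zpowers x) := by
  obtain ⟨f, hf⟩ := dihedral_hom n x t (by rw [← hx, pow_orderOf_eq_one]) ht h
  refine ⟨f, ?_, ?_⟩
  · rw [injective_iff_map_eq_one]
    rintro (i | i) <;> obtain ⟨i, rfl⟩ := ZMod.intCast_surjective i
    · rw [(hf i).1]
      intro h
      rw [zmod_inj n x hx i h]; rfl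
    · rw [(hf i).2]
      intro h
      exfalso; apply hn
      rw [eq_inv_of_mul_eq_one_left h]
      exact inv_mem ⟨i, rfl⟩
  · intro g
    constructor
    · rintro ⟨(i | i), rfl⟩ <;> obtain ⟨i, rfl⟩ := ZMod.intCast_surjective i
      · left; rw [(hf i).1]; exact ⟨i, rfl⟩
      · right; rw [(hf i).2, ← mul_assoc, ht, one_mul]; exact ⟨i, rfl⟩
    · rintro (⟨k, rfl⟩ | ⟨k, hk⟩)
      · exact ⟨_, (hf k).1⟩
      · refine ⟨_, (hf k).2.trans ?_⟩
        simp only at hk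
        rw [hk, ← mul_assoc, ht, one_mul]

theorem prod_iso {A G : Type*} [Group A] [Group G] (f : A →* G) (hf : Function.Injective f) (u : G)
    (hu : u * u = 1) (hur : u ∉ f.range) (hc : ∀ g ∈ f.range, g * u = u * g)
    (hs : ∀ g, g ∈ f.range ∨ g * u ∈ f.range) : Nonempty (G ≃* A × Multiplicative (ZMod 2)) := by
  obtain ⟨q, hq, hqr⟩ := zmod_hom_inj 2 u (by
    apply orderOf_eq_prime
    · rw [pow_two, hu]
    · rintro rfl; exact hur (one_mem _))
  have hqu : ∀ b, q b ∈ Subgroup.zpowers u := fun b => (hqr _).1 ⟨b, rfl⟩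
  have hz : ∀ b ∈ Subgroup.zpowers u, b = 1 ∨ b = u := by
    rintro _ ⟨k, rfl⟩
    rcases Int.even_or_odd' k with ⟨m, rfl | rfl⟩
    · left; simp only; rw [zpow_mul]; norm_cast; rw [pow_two, hu, one_zpow]
    · right; simp only; rw [zpow_add, zpow_mul]; norm_cast; rw [pow_two, hu, one_zpow]; simp
  have hcomm : ∀ a b, Commute (f a) (q b) := by
    intro a b
    obtain ⟨k, hk⟩ := hqu b
    rw [← hk]
    exact Commute.zpow_right (hc _ ⟨a, rfl⟩) k
  let F := f.noncommCoprod q hcomm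
  have hF : ∀ a b, F (a, b) = f a * q b := fun a b => rfl
  have : Function.Bijective F := by
    constructor
    · rw [injective_iff_map_eq_one]
      rintro ⟨a, b⟩ h
      rw [hF] at h
      rcases hz _ (hqu b) with hb | hb
      · rw [hb, mul_one] at h
        rw [hf (h.trans (map_one f).symm), hq (hb.trans (map_one q).symm)]; rfl
      · exfalso; rw [hb] at h
        apply hur
        rw [eq_inv_of_mul_eq_one_right h]
        exact inv_mem ⟨a, rfl⟩
    · intro g
      rcases hs g with ⟨a, ha⟩ | ⟨a, ha⟩
      · exact ⟨(a, 1), by rw [hF, ha]; simp⟩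
      · obtain ⟨b, hb⟩ := (hqr u).2 (Subgroup.mem_zpowers u)
        exact ⟨(a, b), by rw [hF, ha, hb, mul_assoc, hu, mul_one]⟩
  exact ⟨(MulEquiv.ofBijective F this).symm⟩

/-- Order 5 case. -/
theorem case5 {G : Type*} [Group G] (x : G) (hx : orderOf x = 5)
    (h : ∀ g, g ∉ Subgroup.zpowers x → g * g = 1) :
    Nonempty (G ≃* Multiplicative (ZMod 5)) ∨ Nonempty (G ≃* DihedralGroup 5) := by
  by_cases hall : ∀ g, g ∈ Subgroup.zpowers x
  · left
    obtain ⟨f, hf, hr⟩ := zmod_hom_inj 5 x hx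
    exact ⟨(MulEquiv.ofBijective f ⟨hf, fun g => (hr g).2 (hall g)⟩).symm⟩
  · right
    push Not at hall
    obtain ⟨t, ht⟩ := hall
    have inv : ∀ s, s ∉ Subgroup.zpowers x → s * x * s = x⁻¹ := by
      intro s hs
      have := h (s * x) (fun hh => hs ((Subgroup.mul_mem_cancel_right _ (Subgroup.mem_zpowers x)).1 hh))
      rw [← mul_assoc] at this
      exact eq_inv_of_mul_eq_one_left this
    obtain ⟨f, hf, hr⟩ := dihedral_hom_inj 5 x t hx (h t ht) (inv t ht) ht
    refine ⟨(MulEquiv.ofBijective f ⟨hf, fun g => (hr g).2 ?_⟩).symm⟩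
    by_contra! hcon
    have h1 := inv g hcon.1
    have h2 := inv _ hcon.2
    have h3 := inv t ht
    have h4 := h t ht
    have h5 := h g hcon.1
    have h6 := h _ hcon.2
    have e1 : x = (t * g) * x * (t * g) := by
      have : t * g = g * t := by
        have a1 : t⁻¹ = t := inv_eq_of_mul_eq_one_right h4
        have a2 : g⁻¹ = g := inv_eq_of_mul_eq_one_right h5
        have a3 : (t * g)⁻¹ = t * g := inv_eq_of_mul_eq_one_right h6
        rw [← a3, mul_inv_rev, a1, a2]
      have a4 : g * x⁻¹ * g = x := by
        rw [← h1]; simp only [mul_assoc, h5, mul_one]; rw [← mul_assoc, h5, one_mul]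
      calc x = g * x⁻¹ * g := a4.symm
        _ = g * (t * x * t) * g := by rw [h3]
        _ = (g * t) * x * (t * g) := by simp only [mul_assoc]
        _ = _ := by rw [← this]
    rw [h2] at e1
    have : orderOf x ∣ 2 := orderOf_dvd_of_pow_eq_one (by rw [pow_two]; nth_rewrite 1 [e1]; simp)
    rw [hx] at this
    omega

/-- Order 4 case. -/
theorem case4 {G : Type*} [Group G] (a b : G) (ha1 : a * a ≠ 1) (ha4 : a * a * (a * a) = 1)
    (hab : b * b = a * a) (hne : b ≠ a) (hne' : b ≠ a⁻¹)
    (h : ∀ g, g * g = 1 ∨ g = a ∨ g = a⁻¹ ∨ g = b ∨ g = b⁻¹) :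
    Nonempty (G ≃* Multiplicative (ZMod 4 × ZMod 2)) ∨
       Nonempty (G ≃* DihedralGroup 4 × Multiplicative (ZMod 2)) := by
  have ha : orderOf a = 4 := by
    have := orderOf_eq_prime_pow (p := 2) (n := 1) (x := a) (by simpa [pow_two] using ha1)
      (by rw [← ha4]; norm_num [pow_succ, mul_assoc])
    simpa using this
  have hz : ∀ g, g ∈ Subgroup.zpowers a ↔ g = 1 ∨ g = a ∨ g = a * a ∨ g = a⁻¹ := by
    intro g
    constructor
    · rintro ⟨k, rfl⟩
      simp only
      have hk : k % 4 = 0 ∨ k % 4 = 1 ∨ k % 4 = 2 ∨ k % 4 = 3 := by omega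
      have e := zpow_mod_orderOf a k
      rw [ha] at e
      rw [← e]
      push_cast
      rcases hk with hk | hk | hk | hk <;> rw [hk]
      · simp
      · simp
      · right; right; left; norm_cast; exact pow_two a
      · right; right; right
        rw [eq_inv_iff_mul_eq_one, ← ha4]; norm_cast; simp only [pow_succ, pow_zero, one_mul, mul_assoc]
    · rintro (rfl | rfl | rfl | rfl)
      · exact one_mem _
      · exact Subgroup.mem_zpowers _
      · exact mul_mem (Subgroup.mem_zpowers _) (Subgroup.mem_zpowers _)
      · exact inv_mem (Subgroup.mem_zpowers _)
  have hainv : a⁻¹ = a * a * a := by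
    rw [inv_eq_iff_mul_eq_one, ← ha4]; group
  have hbinv : b⁻¹ = a * a * b := by
    rw [inv_eq_iff_mul_eq_one, ← ha4, ← hab]; group
  have hzinv : (a * a)⁻¹ = a * a := inv_eq_of_mul_eq_one_right ha4
  have hsq : ∀ g, g * g = 1 ∨ g * g = a * a := by
    intro g
    rcases h g with h | rfl | rfl | rfl | rfl
    · left; exact h
    · right; rfl
    · right; rw [← mul_inv_rev, hzinv]
    · right; exact hab
    · right; rw [← mul_inv_rev, hab, hzinv]
  have hcen : ∀ g, g * (a * a) = a * a * g := by
    intro g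
    have e : g * (a * a) * g⁻¹ = (g * a * g⁻¹) * (g * a * g⁻¹) := by group
    rcases hsq (g * a * g⁻¹) with h | h
    · exfalso; rw [h] at e; apply ha1
      rwa [mul_inv_eq_one, mul_eq_left] at e
    · rw [h] at e
      rwa [mul_inv_eq_iff_eq_mul] at e
  have hcomm : a * b = b * a := by
    rcases h (a * b) with h | h | h | h | h
    · have : a * b = b⁻¹ * a⁻¹ := by
        rw [← mul_inv_rev, eq_inv_iff_mul_eq_one]; exact h
      have e : (a * b)⁻¹ = a * b := inv_eq_of_mul_eq_one_right h
      rw [this, hainv, hbinv]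
      calc a * a * b * (a * a * a) = a * a * (b * (a * a)) * a := by group
        _ = a * a * (a * a) * (b * a) := by rw [hcen]; group
        _ = _ := by rw [ha4, one_mul]
    · rw [mul_eq_left] at h; simp [h]
    · exfalso
      have : b = a * a := by
        have : b = a⁻¹ * a⁻¹ := by rw [eq_inv_mul_iff_mul_eq]; exact h
        rw [this, ← mul_inv_rev, hzinv]
      rw [this] at hab; rw [ha4] at hab; exact ha1 hab.symm
    · rw [mul_eq_right] at h; simp [h]
    · exfalso
      have : a = a * a := by
        have : a = b⁻¹ * b⁻¹ := by rw [eq_mul_inv_iff_mul_eq]; exact h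
        nth_rewrite 1 [this]
        rw [← mul_inv_rev, hab, hzinv]
      apply ha1
      rw [left_eq_mul] at this; rw [this]; simp
  have hu2 : a * b * (a * b) = 1 := by
    calc a * b * (a * b) = a * (b * a) * b := by group
      _ = a * a * (b * b) := by rw [← hcomm]; group
      _ = 1 := by rw [hab, ha4]
  have hbu : b = a⁻¹ * (a * b) := by group
  obtain ⟨u, hu⟩ : ∃ u, u = a * b := ⟨_, rfl⟩
  rw [← hu] at hu2 hbu
  have hau : a * u = u * a := by rw [hu, mul_assoc, ← hcomm]
  have huz : u ∉ Subgroup.zpowers a := by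
    rw [hz, hu]
    rintro (h | h | h | h)
    · exact hne' (eq_inv_of_mul_eq_one_right h)
    · rw [mul_eq_left] at h; rw [h] at hab; simp at hab; exact ha1 hab.symm
    · exact hne (mul_left_cancel h)
    · have : b = a⁻¹ * a⁻¹ := by rw [eq_inv_mul_iff_mul_eq]; exact h
      rw [← mul_inv_rev, hzinv] at this
      rw [this] at hab; rw [ha4] at hab; exact ha1 hab.symm
  have haz := Subgroup.mem_zpowers a
  -- four special elements
  have hsp : ∀ g, (g = a ∨ g = a⁻¹ ∨ g = b ∨ g = b⁻¹) →
      g ∈ Subgroup.zpowers a ∨ g * u ∈ Subgroup.zpowers a := by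
    rintro g (rfl | rfl | rfl | rfl)
    · left; exact haz
    · left; exact inv_mem haz
    · right; rw [hbu, mul_assoc, hu2, mul_one]; exact inv_mem haz
    · right; rw [hu, hcomm]; simp [haz]
  have hC : ∀ g, g * a = a * g → g ∈ Subgroup.zpowers a ∨ g * u ∈ Subgroup.zpowers a := by
    intro g hg
    rcases h g with h1 | h1
    · rcases h (g * a) with h2 | h2
      · exfalso; apply ha1
        calc a * a = (g * g) * (a * a) := by rw [h1, one_mul]
          _ = g * (g * a) * a := by group
          _ = g * a * (g * a) := by nth_rewrite 1 [hg]; simp only [mul_assoc]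
          _ = 1 := h2
      · rcases hsp _ h2 with h3 | h3
        · left; exact (Subgroup.mul_mem_cancel_right _ haz).1 h3
        · right
          rw [mul_assoc, hau, ← mul_assoc] at h3
          exact (Subgroup.mul_mem_cancel_right _ haz).1 h3
    · exact hsp g h1
  have hzu : ∀ g ∈ Subgroup.zpowers a, g * u = u * g := by
    rintro _ ⟨k, rfl⟩
    exact (Commute.zpow_left (show Commute a u from hau) k)
  by_cases hall : ∀ g, g * a = a * g
  · left
    obtain ⟨f, hf, hr⟩ := zmod_hom_inj 4 a ha
    obtain ⟨e⟩ := prod_iso f hf u hu2 (by rwa [hr]) (fun g hg => hzu g ((hr g).1 hg))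
      (fun g => by simp only [hr]; exact hC g (hall g))
    exact ⟨e.trans (MulEquiv.prodMultiplicative _ _).symm⟩
  · right
    push Not at hall
    obtain ⟨t, ht⟩ := hall
    have hinv : ∀ g, g * a ≠ a * g → g * g = 1 := by
      intro g hg
      rcases h g with h1 | rfl | rfl | rfl | rfl
      · exact h1
      · exact absurd rfl hg
      · exact absurd (by group) hg
      · exact absurd hcomm.symm hg
      · exact absurd (Commute.inv_left (show Commute b a from hcomm.symm)) hg
    have hinv2 : ∀ g, g * a ≠ a * g → g * a * g = a⁻¹ := by
      intro g hg
      have := hinv (g * a) (fun hh => hg (by rw [← mul_assoc] at hh; exact mul_right_cancel hh))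
      rw [← mul_assoc] at this
      exact eq_inv_of_mul_eq_one_left this
    have htt := hinv t ht
    have hta := hinv2 t ht
    have htz : t ∉ Subgroup.zpowers a := by
      rintro ⟨k, rfl⟩
      exact ht ((Commute.refl a).zpow_left k)
    have htu : t * u = u * t := by
      have h1 : t * u * a ≠ a * (t * u) := by
        intro hh
        rw [mul_assoc, ← hau, ← mul_assoc, ← mul_assoc] at hh
        exact ht (mul_right_cancel hh)
      have h2 := hinv _ h1
      have a1 : t⁻¹ = t := inv_eq_of_mul_eq_one_right htt
      have a2 : u⁻¹ = u := inv_eq_of_mul_eq_one_right hu2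
      have a3 : (t * u)⁻¹ = t * u := inv_eq_of_mul_eq_one_right h2
      rw [← a3, mul_inv_rev, a1, a2]
    obtain ⟨f, hf, hr⟩ := dihedral_hom_inj 4 a t ha htt hta htz
    apply prod_iso f hf u hu2
    · rw [hr]
      rintro (h1 | h1)
      · exact huz h1
      · apply ht
        have e1 : t * u * a = a * (t * u) := by
          obtain ⟨k, hk⟩ := h1
          simp only at hk
          rw [← hk]
          exact ((Commute.refl a).zpow_left k)
        rw [mul_assoc, ← hau, ← mul_assoc, ← mul_assoc] at e1
        exact (mul_right_cancel e1)
    · intro g hg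
      rw [hr] at hg
      rcases hg with hg | hg
      · exact hzu g hg
      · have := hzu _ hg
        rw [← mul_assoc, ← htu, mul_assoc, mul_assoc] at this
        exact mul_left_cancel this
    · intro g
      simp only [hr]
      by_cases hg : g * a = a * g
      · rcases hC g hg with h1 | h1
        · left; left; exact h1
        · right; left; exact h1
      · have e : t * g * a = a * (t * g) := by
          have h1 := hinv2 g hg
          have h2 := hinv g hg
          have e1 : g * a = a⁻¹ * g := by rw [← h1, mul_assoc, h2, mul_one]
          have e2 : t * a⁻¹ = a * t := by
            rw [← hta]; simp only [← mul_assoc, htt, one_mul]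
          rw [mul_assoc, e1, ← mul_assoc, e2, mul_assoc]
        rcases hC _ e with h1 | h1
        · left; right; exact h1
        · right; right; rw [← mul_assoc]; exact h1

end LC

namespace LC

theorem five {G : Type*} (T : Finset G) (hT : T.card = 4) (l : List G) (hl : l.Nodup)
    (h5 : l.length = 5) (h : ∀ x ∈ l, x ∈ T) : False := by
  classical
  have h1 : l.toFinset ⊆ T := by
    intro x hx; exact h x (by simpa using hx)
  have := Finset.card_le_card h1
  rw [List.toFinset_card_of_nodup hl] at this
  omega

theorem order4 {G : Type*} [Group G] {x : G} (h1 : x * x ≠ 1) (h2 : x * x * (x * x) = 1) :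
    orderOf x = 4 := by
  have := orderOf_eq_prime_pow (p := 2) (n := 1) (x := x) (by simpa [pow_two] using h1)
      (by rw [← h2]; norm_num [pow_succ, mul_assoc])
  simpa using this

theorem no_three {G : Type*} [Group G] (T : Finset G) (hT : T.card = 4) (h1T : 1 ∈ T)
    (F1 : ∀ x, x * x ≠ 1 → x ∈ T ∨ x⁻¹ ∈ T) (x y : G) (hx : x ^ 3 = 1) (hx1 : x ≠ 1)
    (hy : y ^ 3 = 1) (hy1 : y ≠ 1) (hxy : y ≠ x) (hxy' : y ≠ x⁻¹) : False := by
  have four : ∀ a b c d : G, a * a ≠ 1 → b * b ≠ 1 → c * c ≠ 1 → d * d ≠ 1 →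
      a ≠ b → a ≠ b⁻¹ → a ≠ c → a ≠ c⁻¹ → a ≠ d → a ≠ d⁻¹ → b ≠ c → b ≠ c⁻¹ → b ≠ d → b ≠ d⁻¹ →
      c ≠ d → c ≠ d⁻¹ → False := by
    intro a b c d ha hb hc hd h1 h2 h3 h4 h5 h6 h7 h8 h9 h10 h11 h12
    have pick : ∀ p : G, p * p ≠ 1 → ∃ q, (q = p ∨ q = p⁻¹) ∧ q ∈ T ∧ q ≠ 1 := by
      intro p hp
      have : p ≠ 1 := by rintro rfl; simp at hp
      rcases F1 p hp with h | h
      · exact ⟨p, Or.inl rfl, h, this⟩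
      · exact ⟨p⁻¹, Or.inr rfl, h, by simpa using this⟩
    have ne : ∀ {p q p' q' : G}, p ≠ q → p ≠ q⁻¹ → (p' = p ∨ p' = p⁻¹) → (q' = q ∨ q' = q⁻¹) →
        p' ≠ q' := by
      rintro p q p' q' h1 h2 (rfl | rfl) (rfl | rfl)
      · exact h1
      · exact h2
      · intro h; exact h2 (by rw [← h, inv_inv])
      · intro h; exact h1 (inv_injective h)
    obtain ⟨a', ea, ta, na⟩ := pick a ha
    obtain ⟨b', eb, tb, nb⟩ := pick b hb
    obtain ⟨c', ec, tc, nc⟩ := pick c hc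
    obtain ⟨d', ed, td, nd⟩ := pick d hd
    have g1 := ne h1 h2 ea eb
    have g2 := ne h3 h4 ea ec
    have g3 := ne h5 h6 ea ed
    have g4 := ne h7 h8 eb ec
    have g5 := ne h9 h10 eb ed
    have g6 := ne h11 h12 ec ed
    refine five T hT [1, a', b', c', d'] ?_ rfl ?_
    · simp [g1, g2, g3, g4, g5, g6, na.symm, nb.symm, nc.symm, nd.symm]
    · simp [h1T, ta, tb, tc, td]
  have sq3 : ∀ p : G, p ^ 3 = 1 → p ≠ 1 → p * p ≠ 1 := by
    intro p h3 h1 h2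
    rw [pow_succ, pow_two, h2, one_mul] at h3
    exact h1 h3
  have inv3 : ∀ p : G, p ^ 3 = 1 → p⁻¹ = p * p := by
    intro p h3
    rw [inv_eq_iff_mul_eq_one, ← h3]; simp only [pow_succ, pow_zero, one_mul, mul_assoc]
  have hx2 := sq3 x hx hx1
  have hy2 := sq3 y hy hy1
  have hxi := inv3 x hx
  have hyi := inv3 y hy
  by_cases hc : x * y = y * x
  · have e3 : ∀ q, x * q = q * x → q ^ 3 = 1 → (x * q) ^ 3 = 1 := by
      intro q hq h3
      rw [Commute.mul_pow hq, hx, h3, one_mul]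
    have hc' : x * y⁻¹ = y⁻¹ * x := (Commute.inv_right (show Commute x y from hc))
    refine four x y (x * y) (x * y⁻¹) hx2 hy2 (sq3 _ (e3 y hc hy) ?_)
      (sq3 _ (e3 y⁻¹ hc' (by simp [hy])) ?_) hxy.symm ?_ ?_ ?_ ?_ ?_ ?_ ?_ ?_ ?_ ?_ ?_
    · intro h; exact hxy' (eq_inv_of_mul_eq_one_right h)
    · intro h; exact hxy (mul_inv_eq_one.1 h).symm
    · intro h; exact hxy' (by rw [h, inv_inv])
    · simpa using hy1
    · intro h
      have : x⁻¹ = x * y := by nth_rewrite 1 [h]; rw [inv_inv]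
      rw [hxi] at this
      exact hxy (mul_left_cancel this).symm
    · simpa using hy1
    · intro h
      have : x⁻¹ = x * y⁻¹ := by nth_rewrite 1 [h]; simp
      rw [hxi] at this
      have := mul_left_cancel this
      exact hxy' (by rw [this, inv_inv])
    · simpa using hx1
    · intro h
      have : y⁻¹ = x * y := by nth_rewrite 1 [h]; rw [inv_inv]
      rw [hyi] at this
      exact hxy (mul_right_cancel this)
    · intro h
      rw [eq_mul_inv_iff_mul_eq, ← hyi] at h
      exact hxy' (by rw [← h, inv_inv])
    · intro h
      rw [mul_inv_rev, inv_inv, eq_comm, mul_eq_left, inv_eq_one] at h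
      exact hx1 h
    · intro h
      have := mul_left_cancel h
      rw [eq_inv_iff_mul_eq_one] at this
      exact hy2 this
    · intro h
      rw [mul_inv_rev, inv_inv, hc] at h
      have := mul_left_cancel h
      rw [eq_inv_iff_mul_eq_one] at this
      exact hx2 this
  · have K1 : x * y * x⁻¹ ≠ y := by
      intro h; rw [mul_inv_eq_iff_eq_mul] at h; exact hc h
    have K2 : x * y * x⁻¹ ≠ y⁻¹ := by
      intro h
      have h2 : x * y⁻¹ * x⁻¹ = y := by
        have := congrArg (·⁻¹) h
        simp only [mul_inv_rev, inv_inv] at this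
        rw [← mul_assoc] at this
        exact this
      have : y = y⁻¹ := by
        calc y = (x ^ 3) * y * (x ^ 3)⁻¹ := by rw [hx]; simp
          _ = x * (x * (x * y * x⁻¹) * x⁻¹) * x⁻¹ := by
            simp only [pow_succ, pow_zero, one_mul, mul_inv_rev, mul_assoc]
          _ = y⁻¹ := by rw [h, h2, h]
      rw [eq_inv_iff_mul_eq_one] at this
      exact hy2 this
    have conjsq : ∀ g p : G, p * p ≠ 1 → (g * p * g⁻¹) * (g * p * g⁻¹) ≠ 1 := by
      intro g p hp h
      apply hp
      have : g * p * g⁻¹ * (g * p * g⁻¹) = g * (p * p) * g⁻¹ := by group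
      rw [this, mul_inv_eq_one, mul_eq_left] at h
      exact h
    have e1 : ∀ q, x = x * q * x⁻¹ → q = x := by
      intro q h; rw [eq_mul_inv_iff_mul_eq] at h; exact (mul_left_cancel h).symm
    have e2 : ∀ q, x = x⁻¹ * q * x⁻¹⁻¹ → q = x := by
      intro q h
      rw [eq_mul_inv_iff_mul_eq, eq_inv_mul_iff_mul_eq] at h
      rw [← h]; group
    have i1 : ∀ g q : G, (g * q * g⁻¹)⁻¹ = g * q⁻¹ * g⁻¹ := by intro g q; group
    have e3 : ∀ q, y = x⁻¹ * q * x⁻¹⁻¹ → x * y * x⁻¹ = q := by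
      intro q h; rw [h]; group
    have e4 : ∀ q, x * y * x⁻¹ = x⁻¹ * q * x⁻¹⁻¹ → y = x * q * x⁻¹ := by
      intro q h
      have h3 : y = x⁻¹ * x⁻¹ * q * (x * x) := by
        have : y = x⁻¹ * (x * y * x⁻¹) * x := by group
        rw [this, h]; group
      have h4 : x⁻¹ * x⁻¹ = x := by rw [← mul_inv_rev, ← hxi, inv_inv]
      rw [h4, ← hxi] at h3; exact h3
    refine four x y (x * y * x⁻¹) (x⁻¹ * y * x⁻¹⁻¹) hx2 hy2 (conjsq _ _ hy2) (conjsq _ _ hy2)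
      hxy.symm ?_ ?_ ?_ ?_ ?_ K1.symm ?_ ?_ ?_ ?_ ?_
    · intro h; exact hxy' (by rw [h, inv_inv])
    · intro h; exact hxy (e1 _ h)
    · intro h; rw [i1] at h; exact hxy' (by rw [← e1 _ h, inv_inv])
    · intro h; exact hxy (e2 _ h)
    · intro h; rw [i1] at h; exact hxy' (by rw [← e2 _ h, inv_inv])
    · intro h; apply K2; nth_rewrite 2 [h]; rw [inv_inv]
    · intro h; exact K1 (e3 _ h)
    · intro h; rw [i1] at h; exact K2 (e3 _ h)
    · intro h; exact K1 (e4 _ h).symm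
    · intro h; rw [i1] at h
      have := e4 _ h
      rw [← i1] at this
      apply K2; nth_rewrite 2 [this]; rw [inv_inv]

theorem forward {G : Type*} [Group G] [Finite G] (T : Finset G) (hT : T.card = 4)
    (h1 : ∀ g : G, ∃ s, s ∉ T ∧ g ∈ Subgroup.zpowers s)
    (h2 : ∀ s, s ∉ T → ∀ t, t ∉ T → s ∈ Subgroup.zpowers t → s = t) :
      (Nonempty (G ≃* Multiplicative (ZMod 5)) ∨
       Nonempty (G ≃* DihedralGroup 5) ∨
       Nonempty (G ≃* Multiplicative (ZMod 4 × ZMod 2)) ∨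
       Nonempty (G ≃* DihedralGroup 4 × Multiplicative (ZMod 2))) := by
  classical
  have := Fintype.ofFinite G
  have hsub : ∀ s, s ∉ T → ((Subgroup.zpowers s : Set G).toFinset.erase s) ⊆ T := by
    intro s hs g hg
    simp only [Finset.mem_erase, Set.mem_toFinset, SetLike.mem_coe] at hg
    by_contra hgT
    exact hg.1 (h2 g hgT s hs hg.2)
  have hcard : ∀ s : G, ((Subgroup.zpowers s : Set G).toFinset.erase s).card = orderOf s - 1 := by
    intro s
    rw [Finset.card_erase_of_mem (by simp), Set.toFinset_card]
    congr 1
    exact Fintype.card_zpowers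
  have hle5 : ∀ s, s ∉ T → orderOf s ≤ 5 := by
    intro s hs
    have := Finset.card_le_card (hsub s hs)
    rw [hcard] at this; omega
  have F0 : ∀ x, x ∉ T → x⁻¹ ∉ T → x * x = 1 := by
    intro x hx hx'
    have := h2 x hx _ hx' (by simp)
    exact eq_inv_iff_mul_eq_one.1 this
  by_cases h5 : ∃ s, s ∉ T ∧ orderOf s = 5
  · obtain ⟨s, hs, ho⟩ := h5
    have hTe : (Subgroup.zpowers s : Set G).toFinset.erase s = T :=
      Finset.eq_of_subset_of_card_le (hsub s hs) (by rw [hcard]; omega)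
    have hTs : ∀ g ∈ T, g ∈ Subgroup.zpowers s := by
      intro g hg; rw [← hTe] at hg; simp at hg; exact hg.2
    have := case5 s ho (fun g hg => F0 g (fun h => hg (hTs _ h)) (fun h => hg (by simpa using hTs _ h)))
    tauto
  have hle4 : ∀ s, s ∉ T → orderOf s ≤ 4 := by
    intro s hs
    have := hle5 s hs
    by_contra hh
    exact h5 ⟨s, hs, by omega⟩
  have hpow : ∀ x, ∃ s, s ∉ T ∧ orderOf s ≤ 4 ∧ ∃ k < 4, x = s ^ k := by
    intro x
    obtain ⟨s, hs, hx⟩ := h1 x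
    obtain ⟨k, hk, hk'⟩ := (mem_zpowers_iff_mem_range_orderOf.1 hx) |> Finset.mem_image.1
    refine ⟨s, hs, hle4 s hs, k, ?_, hk'.symm⟩
    have := hle4 s hs
    rw [Finset.mem_range] at hk; omega
  have hO : ∀ x : G, orderOf x = 1 ∨ orderOf x = 2 ∨ orderOf x = 3 ∨ orderOf x = 4 := by
    intro x
    obtain ⟨s, hs, hx⟩ := h1 x
    have e1 := Nat.le_of_dvd (orderOf_pos s) (orderOf_dvd_of_mem_zpowers hx)
    have e2 := hle4 s hs
    have e3 := orderOf_pos x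
    omega
  have sqne : ∀ x : G, 3 ≤ orderOf x → x * x ≠ 1 := by
    intro x hx h
    have := Nat.le_of_dvd (by norm_num) (orderOf_dvd_of_pow_eq_one (n := 2) (x := x) (by rw [pow_two, h]))
    omega
  have sqne' : ∀ x : G, x * x ≠ 1 → 3 ≤ orderOf x := by
    intro x h
    by_contra hx
    apply h
    have e3 := orderOf_pos x
    rw [← pow_two]
    apply orderOf_dvd_iff_pow_eq_one.1
    have : orderOf x = 1 ∨ orderOf x = 2 := by omega
    rcases this with h | h <;> simp [h]
  have F1 : ∀ x, x * x ≠ 1 → x ∈ T ∨ x⁻¹ ∈ T := by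
    intro x hx
    by_contra! h
    exact hx (F0 x h.1 h.2)
  have h1T : (1 : G) ∈ T := by
    by_contra hn
    have : T = ∅ := by
      by_contra hne
      obtain ⟨t, ht⟩ := Finset.nonempty_iff_ne_empty.2 hne
      obtain ⟨s, hs, hts⟩ := h1 t
      have := h2 1 hn s hs (one_mem _)
      subst this
      simp at hts
      exact hs (hts ▸ ht)
    rw [this] at hT; simp at hT
  have oc : ∀ s : G, orderOf s ≤ 4 → s ^ 3 = 1 ∨ s ^ 4 = 1 := by
    intro s hs
    have e3 := orderOf_pos s
    have : orderOf s ∣ 3 ∨ orderOf s ∣ 4 := by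
      interval_cases orderOf s <;> simp
    rcases this with h | h
    · left; exact orderOf_dvd_iff_pow_eq_one.1 h
    · right; exact orderOf_dvd_iff_pow_eq_one.1 h
  have F1' : ∀ x, x * x ≠ 1 → x ∈ T → x⁻¹ ∉ T := by
    intro x hx hxT
    obtain ⟨s, hs, ho, k, hk, rfl⟩ := hpow x
    interval_cases k
    · simp at hx
    · simp at hxT; exact absurd hxT hs
    · rcases oc s ho with h | h
      · have : (s ^ 2)⁻¹ = s := by rw [inv_eq_iff_mul_eq_one, ← h]; simp only [pow_succ]
        rwa [this]
      · exfalso; apply hx; rw [← pow_add, h]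
    · rcases oc s ho with h | h
      · exfalso; apply hx; rw [h, one_mul]
      · have : (s ^ 3)⁻¹ = s := by rw [inv_eq_iff_mul_eq_one, ← h]; simp only [pow_succ]
        rwa [this]
  have F3 : ∀ x ∈ T, orderOf x = 2 → ∃ c, orderOf c = 4 ∧ c * c = x := by
    intro x hxT hx
    have hx2 : x * x = 1 := by rw [← pow_two, ← hx, pow_orderOf_eq_one]
    have hx1 : x ≠ 1 := by rintro rfl; simp at hx
    obtain ⟨s, hs, ho, k, hk, rfl⟩ := hpow x
    interval_cases k
    · simp at hx1
    · simp at hxT; exact absurd hxT hs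
    · refine ⟨s, order4 ?_ ?_, (pow_two s).symm⟩
      · rwa [← pow_two]
      · rwa [← pow_two s]
    · exfalso
      rcases oc s ho with h | h
      · exact hx1 h
      · have e : (s ^ 3)⁻¹ = s := by rw [inv_eq_iff_mul_eq_one, ← h]; simp only [pow_succ]
        rw [inv_eq_of_mul_eq_one_right hx2] at e
        rw [e] at hxT; exact hs hxT
  have F2 : ∀ x, orderOf x = 4 → x * x ∈ T := by
    intro x hx
    by_contra hn
    have hx4 : x ^ 4 = 1 := by rw [← hx, pow_orderOf_eq_one]
    obtain ⟨s, hs, hxs⟩ := h1 x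
    have := h2 _ hn s hs (mul_mem hxs hxs)
    rw [← this] at hxs
    have := orderOf_dvd_of_mem_zpowers hxs
    have e := Nat.le_of_dvd (by norm_num) (this.trans (orderOf_dvd_of_pow_eq_one (n := 2) (by
      rw [← hx4]; simp only [pow_succ, pow_zero, one_mul, mul_assoc])))
    omega
  have pick : ∀ p : G, 3 ≤ orderOf p → ∃ q, (q = p ∨ q = p⁻¹) ∧ q ∈ T ∧ orderOf q = orderOf p := by
    intro p hp
    rcases F1 p (sqne p hp) with h | h
    · exact ⟨p, Or.inl rfl, h, rfl⟩
    · exact ⟨p⁻¹, Or.inr rfl, h, orderOf_inv p⟩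
  have osq : ∀ p : G, orderOf p = 4 → orderOf (p * p) = 2 := by
    intro p hp
    rw [← pow_two, orderOf_pow, hp]; rfl
  have ne_ord : ∀ {p q : G}, orderOf p ≠ orderOf q → p ≠ q := by
    rintro p q h rfl; exact h rfl
  have n3 : ∀ x : G, orderOf x ≠ 3 := by
    intro x0 hx0
    obtain ⟨x, -, hxT, hx⟩ := pick x0 (by omega)
    rw [hx0] at hx
    have hx3 : x ^ 3 = 1 := by rw [← hx, pow_orderOf_eq_one]
    have hx1 : x ≠ 1 := by rintro rfl; simp at hx
    by_cases h4 : ∃ y : G, orderOf y = 4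
    · obtain ⟨y0, hy0⟩ := h4
      obtain ⟨y, -, hyT, hy⟩ := pick y0 (by omega)
      rw [hy0] at hy
      have hyy := osq y hy
      have honly : ∀ c ∈ T, orderOf c = 4 → c = y := by
        intro c hc ho
        by_contra hne
        refine five T hT [1, x, y * y, y, c] ?_ rfl ?_
        · have e1 : (1 : G) ≠ x := hx1.symm
          have e2 : (1 : G) ≠ y * y := ne_ord (by rw [hyy]; simp)
          have e3 : (1 : G) ≠ y := ne_ord (by rw [hy]; simp)
          have e4 : (1 : G) ≠ c := ne_ord (by rw [ho]; simp)
          have e5 : x ≠ y * y := ne_ord (by rw [hyy, hx]; simp)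
          have e6 : x ≠ y := ne_ord (by rw [hy, hx]; simp)
          have e7 : x ≠ c := ne_ord (by rw [ho, hx]; simp)
          have e8 : y * y ≠ y := ne_ord (by rw [hyy, hy]; simp)
          have e9 : y * y ≠ c := ne_ord (by rw [hyy, ho]; simp)
          have e10 : y ≠ c := Ne.symm hne
          simp only [List.nodup_cons, List.mem_cons, List.not_mem_nil, or_false, List.nodup_nil, not_false_eq_true, and_true, not_or]
          tauto
        · simp [h1T, hxT, hyT, hc, F2 y hy]
      have hconj : orderOf (x * y * x⁻¹) = 4 := by
        rw [← hy]; exact MulEquiv.orderOf_eq (MulAut.conj x) y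
      obtain ⟨q, hq, hqT, hqo⟩ := pick (x * y * x⁻¹) (by omega)
      have hqy := honly q hqT (by omega)
      subst hqy
      rcases hq with h | h
      · have hc : Commute x q := by
          rw [eq_mul_inv_iff_mul_eq] at h; exact h.symm
        have := hc.orderOf_mul_eq_mul_orderOf_of_coprime (by rw [hx, hy]; norm_num)
        rw [hx, hy] at this
        have := hO (x * q)
        omega
      · have h' : x * q * x⁻¹ = q⁻¹ := by rw [h, inv_inv]; nth_rewrite 1 [← h]; rfl
        have h2 : x * q⁻¹ * x⁻¹ = q := by
          have := congrArg (·⁻¹) h'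
          simp only [mul_inv_rev, inv_inv] at this
          rw [← mul_assoc] at this
          exact this
        have : q = q⁻¹ := by
          calc q = (x ^ 3) * q * (x ^ 3)⁻¹ := by rw [hx3]; simp
            _ = x * (x * (x * q * x⁻¹) * x⁻¹) * x⁻¹ := by
              simp only [pow_succ, pow_zero, one_mul, mul_inv_rev, mul_assoc]
            _ = q⁻¹ := by rw [h', h2, h']
        rw [eq_inv_iff_mul_eq_one] at this
        exact sqne q (by omega) this
    · push Not at h4
      obtain ⟨y, hyT, hy⟩ : ∃ y ∈ T, y ∉ ({1, x} : Finset G) := by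
        apply Finset.exists_mem_notMem_of_card_lt_card
        have := Finset.card_le_two (a := (1 : G)) (b := x)
        omega
      simp only [Finset.mem_insert, Finset.mem_singleton, not_or] at hy
      have hyo : orderOf y = 3 := by
        rcases hO y with h | h | h | h
        · exact absurd (orderOf_eq_one_iff.1 h) hy.1
        · obtain ⟨c, hc, -⟩ := F3 y hyT h
          exact absurd hc (h4 c)
        · exact h
        · exact absurd h (h4 y)
      refine no_three T hT h1T F1 x y hx3 hx1 (by rw [← hyo, pow_orderOf_eq_one]) hy.1 hy.2 ?_
      rintro rfl
      exact F1' x (sqne x (by omega)) hxT hyT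
  obtain ⟨a0, ha0⟩ : ∃ a : G, orderOf a = 4 := by
    obtain ⟨y, hyT, hy⟩ : ∃ y ∈ T, y ∉ ({1} : Finset G) := by
      apply Finset.exists_mem_notMem_of_card_lt_card
      simp [hT]
    rcases hO y with h | h | h | h
    · simp [orderOf_eq_one_iff.1 h] at hy
    · obtain ⟨c, hc, -⟩ := F3 y hyT h
      exact ⟨c, hc⟩
    · exact absurd h (n3 y)
    · exact ⟨y, h⟩
  obtain ⟨a, -, haT, ha⟩ := pick a0 (by omega)
  rw [ha0] at ha
  have haa := osq a ha
  have haaT := F2 a ha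
  have five' : ∀ p ∈ T, ∀ q ∈ T, p ≠ 1 → q ≠ 1 → p ≠ a → q ≠ a → p ≠ a * a → q ≠ a * a → p = q := by
    intro p hp q hq h1 h2 h3 h4 h5 h6
    by_contra hne
    refine five T hT [1, a, a * a, p, q] ?_ rfl ?_
    · have e2 : (1 : G) ≠ a * a := ne_ord (by rw [haa]; simp)
      have e3 : (1 : G) ≠ a := ne_ord (by rw [ha]; simp)
      have e8 : a ≠ a * a := ne_ord (by rw [haa, ha]; simp)
      simp only [List.nodup_cons, List.mem_cons, List.not_mem_nil, or_false, List.nodup_nil, not_false_eq_true, and_true, not_or]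
      exact ⟨⟨e3, e2, h1.symm, h2.symm⟩, ⟨e8, h3.symm, h4.symm⟩, ⟨h5.symm, h6.symm⟩, hne⟩
    · simp [h1T, haT, haaT, hp, hq]
  obtain ⟨b, hbT, hb⟩ : ∃ y ∈ T, y ∉ ({1, a, a * a} : Finset G) := by
    apply Finset.exists_mem_notMem_of_card_lt_card
    have := Finset.card_le_three (a := (1 : G)) (b := a) (c := a * a)
    omega
  simp only [Finset.mem_insert, Finset.mem_singleton, not_or] at hb
  have hbo : orderOf b = 4 := by
    rcases hO b with h | h | h | h
    · exact absurd (orderOf_eq_one_iff.1 h) hb.1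
    · exfalso
      obtain ⟨c, hc, hcb⟩ := F3 b hbT h
      obtain ⟨q, hq, hqT, hqo⟩ := pick c (by omega)
      have hbb : b⁻¹ = b := inv_eq_of_mul_eq_one_right (by rw [← pow_two, ← h, pow_orderOf_eq_one])
      have hqb : q * q = b := by
        rcases hq with rfl | rfl
        · exact hcb
        · rw [← mul_inv_rev, hcb, hbb]
      have e := five' b hbT q hqT hb.1 (ne_ord (by rw [hqo, hc]; simp)) hb.2.1
        (by rintro rfl; exact hb.2.2 hqb.symm) hb.2.2 (ne_ord (by rw [hqo, hc, haa]; simp))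
      rw [e] at h; omega
    · exact absurd h (n3 b)
    · exact h
  have hbb := osq b hbo
  have hba : b * b = a * a := by
    by_contra hne
    have e := five' b hbT (b * b) (F2 b hbo) hb.1 (ne_ord (by rw [hbb]; simp)) hb.2.1
      (ne_ord (by rw [hbb, ha]; simp)) hb.2.2 hne
    rw [← e] at hbb; omega
  have := case4 a b (sqne a (by omega)) (by rw [← pow_two, ← haa, pow_orderOf_eq_one]) hba hb.2.1
    (by rintro rfl; exact F1' a (sqne a (by omega)) haT hbT) ?_
  · tauto
  · intro g
    by_cases hg : g * g = 1
    · left; exact hg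
    right
    have ho := sqne' g hg
    have ho4 : orderOf g = 4 := by
      have h3 := n3 g
      have := hO g
      omega
    obtain ⟨q, hq, hqT, hqo⟩ := pick g ho
    have : q = a ∨ q = b := by
      by_cases hqa : q = a
      · left; exact hqa
      right
      exact five' q hqT b hbT (ne_ord (by rw [hqo, ho4]; simp)) hb.1 hqa hb.2.1
        (ne_ord (by rw [hqo, ho4, haa]; simp)) hb.2.2
    rcases hq with rfl | rfl
    · tauto
    · rw [inv_eq_iff_eq_inv, inv_eq_iff_eq_inv] at this; tauto

end LC

theorem lambda_eq_card_sub_four_iff {G : Type*} [Group G] [Finite G] :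
    Nat.card G = lambdaCover G + 4 ↔
      (Nonempty (G ≃* Multiplicative (ZMod 5)) ∨
       Nonempty (G ≃* DihedralGroup 5) ∨
       Nonempty (G ≃* Multiplicative (ZMod 4 × ZMod 2)) ∨
       Nonempty (G ≃* DihedralGroup 4 × Multiplicative (ZMod 2))) := by
  constructor
  · intro h
    classical
    have := Fintype.ofFinite G
    obtain ⟨S, hS, h1, h2⟩ := LC.transversal_exists (G := G)
    refine LC.forward Sᶜ ?_ ?_ ?_
    · rw [Finset.card_compl, hS, ← Nat.card_eq_fintype_card, h]; omega
    · intro g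
      obtain ⟨s, hs, hg⟩ := h1 g
      exact ⟨s, by simpa using hs, hg⟩
    · intro s hs t ht hst
      exact h2 s (by simpa using hs) t (by simpa using ht) hst
  · rintro (⟨⟨e⟩⟩ | ⟨⟨e⟩⟩ | ⟨⟨e⟩⟩ | ⟨⟨e⟩⟩)
    · exact LC.back1 e
    · exact LC.back2 e
    · exact LC.back3 e
    · exact LC.back4 e
end

section
/- Let G be a finite group with λ(G) = |G| − 5 such that the maximum order of an element of G is 3. Then G is isomorphic to the alternating group A_4, to C_3 × C_3, or to the group ⟨a,b,c | a³ = b³ = c² = 1, aᶜ = a⁻¹, bᶜ = b⁻¹, ab = ba⟩ ≅ (C_3 × C_3) ⋊ C_2 (with C_2 acting by inversion). -/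
lemma z3_mem {G : Type*} [Group G] {x y : G} (hx : x ^ 3 = 1) (h : y ∈ Subgroup.zpowers x) :
    y = 1 ∨ y = x ∨ y = x⁻¹ := by
  obtain ⟨n, rfl⟩ := Subgroup.mem_zpowers_iff.1 h
  have hx' : x ^ (3 : ℤ) = 1 := by exact_mod_cast hx
  have h1 : n = 3 * (n / 3) + n % 3 := by omega
  have h2 : x ^ n = x ^ (n % 3) := by
    conv_lhs => rw [h1, zpow_add, zpow_mul, hx', one_zpow, one_mul]
  rw [h2]
  have h3 : n % 3 = 0 ∨ n % 3 = 1 ∨ n % 3 = 2 := by omega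
  rcases h3 with h | h | h <;> rw [h]
  · simp
  · simp
  · right; right
    rw [eq_inv_iff_mul_eq_one]
    have : x ^ (2 : ℤ) * x = x ^ 3 := by
      rw [← zpow_add_one]; norm_cast
    rw [this, hx]

section
variable {G : Type*} [Group G] [Finite G]

lemma ord_cases (h3 : IsGreatest {n | ∃ g : G, orderOf g = n} 3) (g : G) :
    g = 1 ∨ orderOf g = 2 ∨ orderOf g = 3 := by
  have h1 : orderOf g ≤ 3 := h3.2 ⟨g, rfl⟩
  have h2 := orderOf_pos g
  rw [← orderOf_eq_one_iff]
  omega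

lemma maxcyc_iff (h3 : IsGreatest {n | ∃ g : G, orderOf g = n} 3) (H : Subgroup G) :
    IsMaximalCyclic H ↔ ∃ g : G, (orderOf g = 2 ∨ orderOf g = 3) ∧ Subgroup.zpowers g = H := by
  constructor
  · rintro ⟨hc, hm⟩
    obtain ⟨g, rfl⟩ := (Subgroup.isCyclic_iff_exists_zpowers_eq_top H).1 hc
    refine ⟨g, ?_, rfl⟩
    rcases ord_cases h3 g with h | h
    · obtain ⟨x, hx⟩ := h3.1
      have := hm (Subgroup.zpowers x) inferInstance (by simp [h])
      have h4 := congrArg (fun K : Subgroup G => Nat.card K) this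
      simp only [Nat.card_zpowers, hx, h] at h4
      simp at h4
    · exact h
  · rintro ⟨g, hg, rfl⟩
    refine ⟨inferInstance, fun K hK hle => ?_⟩
    obtain ⟨k, rfl⟩ := (Subgroup.isCyclic_iff_exists_zpowers_eq_top K).1 hK
    have hd := Subgroup.card_dvd_of_le hle
    apply Subgroup.eq_of_le_of_card_ge hle
    simp only [Nat.card_zpowers] at *
    rcases ord_cases h3 k with h | h | h
    · simp [h]; omega
    · rw [h] at hd ⊢; rcases hg with h' | h' <;> rw [h'] at hd ⊢ <;> omega
    · rw [h] at hd ⊢; rcases hg with h' | h' <;> rw [h'] at hd ⊢ <;> omega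

lemma counts (h : Nat.card G = lambdaCover G + 5)
    (h3 : IsGreatest {n | ∃ g : G, orderOf g = n} 3) :
    Nat.card {g : G // orderOf g = 3} = 8 ∧ Nat.card {H : Subgroup G // Nat.card H = 3} = 4 := by
  classical
  have := Fintype.ofFinite G
  let S2 : Finset G := Finset.univ.filter (fun g => orderOf g = 2)
  let S3 : Finset G := Finset.univ.filter (fun g => orderOf g = 3)
  have e1 : Nat.card G = 1 + S2.card + S3.card := by
    have : (Finset.univ : Finset G) = ({1} ∪ S2) ∪ S3 := by
      ext g
      have := ord_cases h3 g
      simp only [S2, S3, Finset.mem_univ, Finset.mem_union, Finset.mem_filter, Finset.mem_singleton]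
      tauto
    rw [Nat.card_eq_fintype_card, ← Finset.card_univ, this, Finset.card_union_of_disjoint,
      Finset.card_union_of_disjoint, Finset.card_singleton]
    · simp [S2]
    · rw [Finset.disjoint_left]
      intro g hg
      simp only [S2, S3, Finset.mem_univ, Finset.mem_union, Finset.mem_filter,
        Finset.mem_singleton] at *
      rcases hg with rfl | hg
      · simp
      · omega
  have i2 : (S2.image Subgroup.zpowers).card = S2.card := by
    apply Finset.card_image_of_injOn
    intro a ha b hb hab
    simp only [S2, Finset.coe_filter, Finset.mem_univ, true_and, Set.mem_setOf_eq] at ha hb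
    have hab' : Subgroup.zpowers a = Subgroup.zpowers b := hab
    have h1 : b ∈ Subgroup.zpowers a := by rw [hab']; exact Subgroup.mem_zpowers b
    obtain ⟨n, rfl⟩ := Subgroup.mem_zpowers_iff.1 h1
    rcases Int.even_or_odd' n with ⟨k, rfl | rfl⟩
    · have : a ^ (2 : ℤ) = 1 := by
        have := pow_orderOf_eq_one a
        rw [ha] at this; exact_mod_cast this
      rw [zpow_mul, this] at hb
      simp at hb
    · have : a ^ (2 : ℤ) = 1 := by
        have := pow_orderOf_eq_one a
        rw [ha] at this; exact_mod_cast this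
      rw [zpow_add, zpow_mul, this]; simp
  have i3 : S3.card = (S3.image Subgroup.zpowers).card * 2 := by
    rw [Finset.card_eq_sum_card_image Subgroup.zpowers S3]
    apply Finset.sum_const_nat
    intro H hH
    obtain ⟨x, hx, rfl⟩ := Finset.mem_image.1 hH
    simp only [S3, Finset.mem_univ, Finset.mem_filter, true_and] at hx
    have hx3 : x ^ 3 = 1 := by rw [← hx]; exact pow_orderOf_eq_one x
    have : S3.filter (fun a => Subgroup.zpowers a = Subgroup.zpowers x) = {x, x⁻¹} := by
      ext y
      simp only [S3, Finset.mem_univ, Finset.mem_filter, true_and, Finset.mem_insert,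
        Finset.mem_singleton]
      constructor
      · rintro ⟨h1, h2⟩
        have h4 : y ∈ Subgroup.zpowers x := by rw [← h2]; exact Subgroup.mem_zpowers y
        rcases z3_mem hx3 h4 with rfl | h | h
        · simp at h1
        · exact Or.inl h
        · exact Or.inr h
      · rintro (rfl | rfl)
        · exact ⟨hx, rfl⟩
        · simp [hx]
    rw [this, Finset.card_pair]
    intro hh
    have h5 : x ^ 2 = 1 := by rw [pow_two]; nth_rw 1 [hh]; simp
    have := orderOf_dvd_of_pow_eq_one h5
    rw [hx] at this; omega
  have il : lambdaCover G = (S2.image Subgroup.zpowers).card + (S3.image Subgroup.zpowers).card := by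
    rw [← Finset.card_union_of_disjoint, lambdaCover, ← Nat.card_eq_finsetCard]
    · apply Nat.card_congr
      apply Equiv.subtypeEquivRight
      intro H
      rw [maxcyc_iff h3]
      simp only [S2, S3, Finset.mem_union, Finset.mem_image, Finset.mem_filter, Finset.mem_univ,
        true_and, or_and_right, exists_or]
    · rw [Finset.disjoint_left]
      intro H hH hH'
      simp only [S2, S3, Finset.mem_image, Finset.mem_filter, Finset.mem_univ, true_and] at hH hH'
      obtain ⟨a, ha, rfl⟩ := hH
      obtain ⟨b, hb, hab⟩ := hH'
      have h4 := congrArg (fun K : Subgroup G => Nat.card K) hab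
      simp only [Nat.card_zpowers] at h4
      omega
  have i4 : Nat.card {g : G // orderOf g = 3} = S3.card := by
    rw [Nat.card_eq_fintype_card, Fintype.card_subtype]
  have i5 : Nat.card {H : Subgroup G // Nat.card H = 3} = (S3.image Subgroup.zpowers).card := by
    rw [← Nat.card_eq_finsetCard]
    apply Nat.card_congr
    apply Equiv.subtypeEquivRight
    intro H
    simp only [S3, Finset.mem_image, Finset.mem_filter, Finset.mem_univ, true_and]
    constructor
    · intro hH
      have : Fact (Nat.Prime 3) := ⟨Nat.prime_three⟩
      have hc : IsCyclic H := isCyclic_of_prime_card hH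
      obtain ⟨g, rfl⟩ := (Subgroup.isCyclic_iff_exists_zpowers_eq_top H).1 hc
      exact ⟨g, by rwa [Nat.card_zpowers] at hH, rfl⟩
    · rintro ⟨g, hg, rfl⟩
      rwa [Nat.card_zpowers]
  omega

lemma cube_of_comm (h3 : IsGreatest {n | ∃ g : G, orderOf g = n} 3) {x g : G}
    (hx : orderOf x = 3) (hc : Commute x g) : g ^ 3 = 1 := by
  rcases ord_cases h3 g with h | h | h
  · simp [h]
  · have := hc.orderOf_mul_eq_mul_orderOf_of_coprime (by rw [hx, h]; norm_num)
    have h2 : orderOf (x * g) ≤ 3 := h3.2 ⟨_, rfl⟩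
    rw [this, hx, h] at h2
    omega
  · rw [← h]; exact pow_orderOf_eq_one g

lemma nine_of (K : Subgroup G) (hK : ∀ g ∈ K, g ^ 3 = 1) {x y : G} (hx : orderOf x = 3)
    (hxK : x ∈ K) (hyK : y ∈ K) (hy : y ∉ Subgroup.zpowers x) (h9 : Nat.card K ≤ 9) :
    Nat.card K = 9 := by
  have : Fact (Nat.Prime 3) := ⟨Nat.prime_three⟩
  have hp : IsPGroup 3 K := fun g => ⟨1, by
    ext; simpa using hK g g.2⟩
  obtain ⟨n, hn⟩ := IsPGroup.iff_card.1 hp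
  have hle : Subgroup.zpowers x ≤ K := by simpa using hxK
  have hlt : 3 < Nat.card K := by
    by_contra hcon
    have := Subgroup.eq_of_le_of_card_ge hle (by rw [Nat.card_zpowers, hx]; omega)
    exact hy (this ▸ hyK)
  rcases n with _ | _ | _ | n
  · omega
  · omega
  · omega
  · have : 3 ^ (n + 3) ≥ 27 := by
      have := Nat.pow_le_pow_right (n := 3) (by norm_num) (show 3 ≤ n + 3 by omega)
      simpa using this
    omega

lemma caseA (h : Nat.card G = lambdaCover G + 5)
    (h3 : IsGreatest {n | ∃ g : G, orderOf g = n} 3) {x y : G} (hx : orderOf x = 3)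
    (hxy : Commute x y) (hy : y ∉ Subgroup.zpowers x) :
    Nonempty (G ≃* Multiplicative (ZMod 3 × ZMod 3)) ∨
    (∃ a b c : G, a ^ 3 = 1 ∧ b ^ 3 = 1 ∧ c ^ 2 = 1 ∧
      c⁻¹ * a * c = a⁻¹ ∧ c⁻¹ * b * c = b⁻¹ ∧ a * b = b * a ∧
      Subgroup.closure {a, b, c} = ⊤ ∧ Nat.card G = 18) := by
  classical
  have : Fact (Nat.Prime 3) := ⟨Nat.prime_three⟩
  obtain ⟨h8, -⟩ := counts h h3
  set C := Subgroup.centralizer ({x} : Set G) with hC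
  have memC : ∀ g, g ∈ C ↔ Commute x g := fun g => by
    rw [hC, Subgroup.mem_centralizer_singleton_iff]; exact ⟨fun h => h.symm, fun h => h.symm⟩
  have hC3 : ∀ g ∈ C, g ^ 3 = 1 := fun g hg => cube_of_comm h3 hx ((memC g).1 hg)
  have hT : Nat.card {g : G // g ^ 3 = 1} = 9 := by
    have e : {g : G | g ^ 3 = 1} = insert 1 {g : G | orderOf g = 3} := by
      ext g
      simp only [Set.mem_setOf_eq, Set.mem_insert_iff]
      constructor
      · intro hg
        by_cases h1 : g = 1
        · exact Or.inl h1
        · exact Or.inr (orderOf_eq_prime hg h1)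
      · rintro (rfl | hg)
        · simp
        · rw [← hg]; exact pow_orderOf_eq_one g
    have : Set.ncard {g : G | g ^ 3 = 1} = 9 := by
      rw [e, Set.ncard_insert_of_notMem (by simp) (Set.toFinite _)]
      have : Set.ncard {g : G | orderOf g = 3} = 8 := h8
      omega
    exact this
  have hCT : (C : Set G) ⊆ {g : G | g ^ 3 = 1} := hC3
  have hTn : Set.ncard {g : G | g ^ 3 = 1} = 9 := hT
  have hCn : Set.ncard (C : Set G) = Nat.card C := rfl
  have hC9 : Nat.card C = 9 := by
    apply nine_of C hC3 hx ((memC _).2 (Commute.refl x)) ((memC _).2 hxy) hy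
    rw [← hCn, ← hTn]
    exact Set.ncard_le_ncard hCT (Set.toFinite _)
  have hCeq : (C : Set G) = {g : G | g ^ 3 = 1} :=
    Set.eq_of_subset_of_ncard_le hCT (by omega) (Set.toFinite _)
  have memC' : ∀ g, g ∈ C ↔ g ^ 3 = 1 := fun g => by
    rw [← SetLike.mem_coe, hCeq]; rfl
  by_cases htop : C = ⊤
  · left
    have hG9 : Nat.card G = 3 ^ 2 := by
      rw [← Subgroup.card_top (G := G), ← htop, hC9]; norm_num
    letI : CommGroup G := IsPGroup.commGroupOfCardEqPrimeSq hG9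
    letI : Module (ZMod 3) (Additive G) := AddCommGroup.zmodModule (fun g => by
      have : g.toMul ^ 3 = 1 := hC3 _ (by rw [htop]; trivial)
      exact this)
    have hf : Nat.card (Additive G) = 3 ^ 2 := hG9
    rw [Module.natCard_eq_pow_finrank (K := ZMod 3), Nat.card_zmod] at hf
    have hf' := Nat.pow_right_injective (le_refl 2 |>.trans (by norm_num : 2 ≤ 3)) hf
    have e : Additive G ≃ₗ[ZMod 3] (ZMod 3 × ZMod 3) := LinearEquiv.ofFinrankEq _ _ (by
      rw [hf']; simp)
    exact ⟨(MulEquiv.refl G : G ≃* G).trans (AddEquiv.toMultiplicativeRight e.toAddEquiv)⟩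
  · right
    obtain ⟨c, hc⟩ : ∃ c, c ∉ C := by
      by_contra hcon
      push Not at hcon
      exact htop (eq_top_iff.2 fun g _ => hcon g)
    have sq : ∀ g, g ∉ C → g * g = 1 := fun g hg => by
      rw [← pow_two]
      rcases ord_cases h3 g with h | h | h
      · simp [h]
      · rw [← h]; exact pow_orderOf_eq_one g
      · exact absurd ((memC' g).2 (by rw [← h]; exact pow_orderOf_eq_one g)) hg
    have invt : ∀ g, g ∉ C → ∀ z ∈ C, g * z * g = z⁻¹ := fun g hg z hz => by
      have : g * z ∉ C := fun hh => hg ((Subgroup.mul_mem_cancel_right C hz).1 hh)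
      have := sq _ this
      rw [eq_inv_iff_mul_eq_one, ← this]; group
    have hxC : x ∈ C := (memC _).2 (Commute.refl x)
    have hyC : y ∈ C := (memC _).2 hxy
    have cinv : c⁻¹ = c := inv_eq_of_mul_eq_one_left (sq c hc)
    have key : ∀ g, g ∉ C → g * c ∈ C := fun g hg => by
      rw [memC]
      have h1 := invt c hc x hxC
      have h2 := invt g hg x⁻¹ (inv_mem hxC)
      have h4 := sq g hg
      have h5 := sq c hc
      have h6 : c * x = x⁻¹ * c := by
        rw [← h1, mul_assoc (c * x), h5, mul_one]
      have h7 : g * x⁻¹ = x * g := by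
        rw [inv_inv] at h2
        conv_rhs => rw [← h2]
        rw [mul_assoc _ g g, h4, mul_one]
      show x * (g * c) = g * c * x
      rw [mul_assoc g c x, h6, ← mul_assoc, ← mul_assoc, h7]
    refine ⟨x, y, c, hC3 x hxC, hC3 y hyC, by rw [pow_two]; exact sq c hc,
      by rw [cinv]; exact invt c hc x hxC, by rw [cinv]; exact invt c hc y hyC, hxy, ?_, ?_⟩
    · set Q := Subgroup.closure ({x, y, c} : Set G) with hQ
      have qx : x ∈ Q := Subgroup.subset_closure (by simp)
      have qy : y ∈ Q := Subgroup.subset_closure (by simp)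
      have qc : c ∈ Q := Subgroup.subset_closure (by simp)
      have hle : Nat.card (Q ⊓ C : Subgroup G) ≤ 9 := by
        rw [← hC9]; exact Subgroup.card_le_of_le inf_le_right
      have h9 := nine_of (Q ⊓ C) (fun g hg => hC3 g hg.2) hx ⟨qx, hxC⟩ ⟨qy, hyC⟩ hy hle
      have heq : Q ⊓ C = C := Subgroup.eq_of_le_of_card_ge inf_le_right (by omega)
      have hCQ : C ≤ Q := inf_eq_right.1 heq
      rw [eq_top_iff]
      intro g _
      by_cases hg : g ∈ C
      · exact hCQ hg
      · exact (Subgroup.mul_mem_cancel_right Q qc).1 (hCQ (key g hg))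
    · have hi : C.index = 2 := by
        rw [Subgroup.index_eq_two_iff]
        refine ⟨c, fun b => ?_⟩
        by_cases hb : b ∈ C
        · exact Or.inr ⟨hb, fun hh => hc ((Subgroup.mul_mem_cancel_left C hb).1 hh)⟩
        · exact Or.inl ⟨key b hb, hb⟩
      rw [← Subgroup.card_mul_index C, hi, hC9]

/-- Conjugation on subgroups of order three. -/
def conj3 (G : Type*) [Group G] : MulAction G {H : Subgroup G // Nat.card H = 3} where
  smul g H := ⟨H.1.map (MulAut.conj g).toMonoidHom, by
    rw [Subgroup.card_map_of_injective (MulAut.conj g).injective]; exact H.2⟩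
  one_smul H := by
    apply Subtype.ext
    show H.1.map (MulAut.conj 1).toMonoidHom = H.1
    ext; simp
  mul_smul g k H := by
    apply Subtype.ext
    show H.1.map (MulAut.conj (g * k)).toMonoidHom =
      (H.1.map (MulAut.conj k).toMonoidHom).map (MulAut.conj g).toMonoidHom
    rw [Subgroup.map_map, map_mul]; rfl

lemma caseB (h : Nat.card G = lambdaCover G + 5)
    (h3 : IsGreatest {n | ∃ g : G, orderOf g = n} 3)
    (hno : ∀ x y : G, orderOf x = 3 → Commute x y → y ∈ Subgroup.zpowers x) :
    Nonempty (G ≃* alternatingGroup (Fin 4)) := by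
  classical
  obtain ⟨h8, h4⟩ := counts h h3
  letI := conj3 G
  let e : {H : Subgroup G // Nat.card H = 3} ≃ Fin 4 := Finite.equivFinOfCardEq h4
  let f : G →* Equiv.Perm (Fin 4) :=
    (Equiv.permCongrHom e).toMonoidHom.comp (MulAction.toPermHom G {H : Subgroup G // Nat.card H = 3})
  have cube : ∀ x : G, orderOf x = 3 → x ^ 3 = 1 := fun x hx => by
    rw [← hx]; exact pow_orderOf_eq_one x
  have kerprop : ∀ k ∈ f.ker, ∀ x : G, orderOf x = 3 → k * x * k⁻¹ = x ∨ k * x * k⁻¹ = x⁻¹ := by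
    intro k hk x hx
    have h1 : MulAction.toPermHom G {H : Subgroup G // Nat.card H = 3} k = 1 := by
      have : (Equiv.permCongrHom e) (MulAction.toPermHom G _ k) = 1 := hk
      exact (Equiv.permCongrHom e).injective (by rw [this, map_one])
    have h2 := congrArg (fun p : Equiv.Perm {H : Subgroup G // Nat.card H = 3} =>
      (p ⟨Subgroup.zpowers x, by rw [Nat.card_zpowers, hx]⟩).1) h1
    have h5 : (Subgroup.zpowers x).map (MulAut.conj k).toMonoidHom = Subgroup.zpowers x := h2
    have h6 : k * x * k⁻¹ ∈ Subgroup.zpowers x := by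
      rw [← h5]
      exact ⟨x, Subgroup.mem_zpowers x, rfl⟩
    rcases z3_mem (cube x hx) h6 with h7 | h7 | h7
    · have : x = 1 := by simpa using h7
      simp [this] at hx
    · exact Or.inl h7
    · exact Or.inr h7
  have no3 : ∀ x ∈ f.ker, orderOf x ≠ 3 := by
    intro x hxk hx
    obtain ⟨y, hy, hyn⟩ : ∃ y : G, orderOf y = 3 ∧ y ∉ Subgroup.zpowers x := by
      by_contra hcon
      push Not at hcon
      have h1 : {g : G | orderOf g = 3} ⊆ (Subgroup.zpowers x : Set G) := hcon
      have h2 := Set.ncard_le_ncard h1 (Set.toFinite _)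
      have h5 : Set.ncard {g : G | orderOf g = 3} = 8 := h8
      have h6 : Set.ncard (Subgroup.zpowers x : Set G) = 3 := by
        rw [← hx, ← Nat.card_zpowers]; rfl
      omega
    have hcomm : Commute x y → False := fun hc => hyn (hno x y hx hc)
    rcases kerprop x hxk y hy with h1 | h1
    · exact hcomm (mul_inv_eq_iff_eq_mul.1 h1)
    · have h2 : x * x * y = y * (x * x) := by
        have a1 : x * y = y⁻¹ * x := mul_inv_eq_iff_eq_mul.1 h1
        have a2 : x * y⁻¹ = y * x := by
          have := congrArg (fun t => t⁻¹) h1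
          simp only [mul_inv_rev, inv_inv] at this
          rw [← mul_inv_eq_iff_eq_mul, mul_assoc]; exact this
        rw [mul_assoc, a1, ← mul_assoc, a2, mul_assoc]
      apply hcomm
      have h5 : Commute (x * x) y := h2
      have h6 : x = (x * x) * (x * x) := by
        have := cube x hx
        calc x = x ^ 3 * x := by rw [this, one_mul]
          _ = _ := by simp only [pow_succ, pow_zero, one_mul, mul_assoc]
      rw [h6]
      exact h5.mul_left h5
  have hker : f.ker = ⊥ := by
    rw [eq_bot_iff]
    intro k hk
    rw [Subgroup.mem_bot]
    rcases ord_cases h3 k with h1 | h1 | h1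
    · exact h1
    · exfalso
      obtain ⟨x, hx⟩ := h3.1
      have hx3 := cube x hx
      rcases kerprop k hk x hx with h2 | h2
      · have h5 : Commute x k := (mul_inv_eq_iff_eq_mul.1 h2).symm
        have := orderOf_dvd_of_pow_eq_one (cube_of_comm h3 hx h5)
        rw [h1] at this; omega
      · have h5 : k * (x * k⁻¹ * x⁻¹) ∈ f.ker :=
          mul_mem hk ((inferInstance : f.ker.Normal).conj_mem _ (inv_mem hk) x)
        have h6 : k * (x * k⁻¹ * x⁻¹) = x := by
          calc k * (x * k⁻¹ * x⁻¹) = (k * x * k⁻¹) * x⁻¹ := by group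
            _ = x⁻¹ * x⁻¹ := by rw [h2]
            _ = x * (x ^ 3)⁻¹ := by group
            _ = x := by rw [hx3]; simp
        rw [h6] at h5
        exact no3 x h5 hx
    · exact absurd h1 (no3 k hk)
  have finj : Function.Injective f := (MonoidHom.ker_eq_bot_iff f).1 hker
  have eG : G ≃* f.range := MonoidHom.ofInjective finj
  have hcG : Nat.card G = Nat.card f.range := Nat.card_congr eG.toEquiv
  have h24 : Nat.card (Equiv.Perm (Fin 4)) = 24 := by
    rw [Nat.card_eq_fintype_card, Fintype.card_perm]; rfl
  have hci := Subgroup.card_mul_index f.range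
  have hge : 9 ≤ Nat.card G := by
    have h1 : insert (1 : G) {g : G | orderOf g = 3} ⊆ Set.univ := Set.subset_univ _
    have h2 := Set.ncard_le_ncard h1 (Set.toFinite _)
    rw [Set.ncard_insert_of_notMem (by simp) (Set.toFinite _), Set.ncard_univ] at h2
    have h5 : Set.ncard {g : G | orderOf g = 3} = 8 := h8
    omega
  have hidx : f.range.index = 1 ∨ f.range.index = 2 := by
    rw [h24, ← hcG] at hci
    have : f.range.index < 3 := by nlinarith
    have : f.range.index ≠ 0 := by intro h0; rw [h0] at hci; omega
    omega
  rcases hidx with hi | hi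
  · exfalso
    have htop := Subgroup.index_eq_one.1 hi
    obtain ⟨g, hg⟩ : finRotate 4 ∈ f.range := by rw [htop]; trivial
    have : orderOf g = 4 := by
      rw [← orderOf_injective f finj, hg]
      rw [(isCycle_finRotate (n := 2)).orderOf, support_finRotate]; rfl
    have h5 : orderOf g ≤ 3 := h3.2 ⟨g, rfl⟩
    omega
  · have := Equiv.Perm.eq_alternatingGroup_of_index_eq_two hi
    exact ⟨eG.trans (MulEquiv.subgroupCongr this)⟩

end

theorem lambda_eq_card_sub_five_max_order_three {G : Type*} [Group G] [Finite G]
    (h : Nat.card G = lambdaCover G + 5)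
    (h3 : IsGreatest {n | ∃ g : G, orderOf g = n} 3) :
    Nonempty (G ≃* alternatingGroup (Fin 4)) ∨
    Nonempty (G ≃* Multiplicative (ZMod 3 × ZMod 3)) ∨
    (∃ a b c : G, a ^ 3 = 1 ∧ b ^ 3 = 1 ∧ c ^ 2 = 1 ∧
      c⁻¹ * a * c = a⁻¹ ∧ c⁻¹ * b * c = b⁻¹ ∧ a * b = b * a ∧
      Subgroup.closure {a, b, c} = ⊤ ∧ Nat.card G = 18) := by
  by_cases hh : ∃ x y : G, orderOf x = 3 ∧ Commute x y ∧ y ∉ Subgroup.zpowers x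
  · obtain ⟨x, y, hx, hxy, hy⟩ := hh
    exact Or.inr (caseA h h3 hx hxy hy)
  · push Not at hh
    exact Or.inl (caseB h h3 hh)
end

section
/- Let G be a finite group with λ(G) = |G| − 5 such that the maximum order of an element of G is 4. Then G is isomorphic to the quaternion group Q_8 of order 8. -/
section aux
variable {G : Type*} [Group G]

lemma aux_gen {x y : G} (hx : orderOf x = 2 ∨ orderOf x = 3 ∨ orderOf x = 4)
    (h : y ∈ Subgroup.zpowers x) (ho : orderOf y = orderOf x) : y = x ∨ y = x⁻¹ := by
  classical
  have hf : IsOfFinOrder x := by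
    rw [← orderOf_pos_iff]; omega
  rw [← hf.mem_powers_iff_mem_zpowers, hf.mem_powers_iff_mem_range_orderOf] at h
  simp only [Finset.mem_image, Finset.mem_range] at h
  obtain ⟨k, hk, rfl⟩ := h
  have hp := pow_orderOf_eq_one x
  rcases hx with hx | hx | hx <;> rw [hx] at hk hp ho <;> interval_cases k
  · simp at ho
  · simp
  · simp at ho
  · simp
  · right; exact eq_inv_of_mul_eq_one_left (by rw [← pow_succ]; exact hp)
  · simp at ho
  · simp
  · exfalso
    have : orderOf (x ^ 2) ∣ 2 := orderOf_dvd_of_pow_eq_one (by rw [← pow_mul]; exact hp)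
    rw [ho] at this
    omega
  · right; exact eq_inv_of_mul_eq_one_left (by rw [← pow_succ]; exact hp)

lemma aux_two {x y : G} (hy : orderOf y = 4) (hx : orderOf x = 2)
    (h : x ∈ Subgroup.zpowers y) : y ^ 2 = x := by
  classical
  have hf : IsOfFinOrder y := by
    rw [← orderOf_pos_iff]; omega
  rw [← hf.mem_powers_iff_mem_zpowers, hf.mem_powers_iff_mem_range_orderOf] at h
  simp only [Finset.mem_image, Finset.mem_range] at h
  obtain ⟨k, hk, rfl⟩ := h
  rw [hy] at hk
  rw [orderOf_pow' _ (by rintro rfl; simp at hx), hy] at hx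
  interval_cases k <;> simp at hx ⊢

lemma aux_max [Finite G] (x : G) : IsMaximalCyclic (Subgroup.zpowers x) ↔
    ∀ y, x ∈ Subgroup.zpowers y → orderOf x = orderOf y := by
  constructor
  · intro ⟨_, h⟩ y hy
    have := h (Subgroup.zpowers y) inferInstance (by simpa using hy)
    rw [← Nat.card_zpowers, ← Nat.card_zpowers, this]
  · intro h
    refine ⟨inferInstance, fun K hK hle => ?_⟩
    obtain ⟨y, rfl⟩ := (Subgroup.isCyclic_iff_exists_zpowers_eq_top K).1 hK
    apply Subgroup.eq_of_le_of_card_ge hle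
    rw [Nat.card_zpowers, Nat.card_zpowers, h y (by simpa using hle)]

lemma aux_R [Fintype G] [DecidableEq G] (h : Nat.card G = lambdaCover G + 5)
    (hle : ∀ x : G, orderOf x ≤ 4) (h4 : ∃ x : G, orderOf x = 4) :
    ∃ R : Finset G, R.card = 5 ∧ 1 ∈ R ∧
      (∀ x, orderOf x = 3 ∨ orderOf x = 4 → (x ∈ R ↔ x⁻¹ ∉ R)) ∧
      (∀ x, orderOf x = 2 → (x ∈ R ↔ ∃ y : G, orderOf y = 4 ∧ y ^ 2 = x)) := by
  classical
  have hpos : ∀ x : G, 0 < orderOf x := fun x => orderOf_pos x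
  have hc : ∀ H : {H : Subgroup G // IsMaximalCyclic H}, ∃ g : G, Subgroup.zpowers g = H.1 :=
    fun H => (Subgroup.isCyclic_iff_exists_zpowers_eq_top H.1).1 H.2.1
  choose g hg using hc
  have hinj : Function.Injective g := by
    intro H K e
    apply Subtype.ext
    rw [← hg, ← hg, e]
  have hdvd : ∀ x y : G, x ∈ Subgroup.zpowers y → orderOf x ∣ orderOf y := by
    intro x y hxy
    exact orderOf_dvd_of_mem_zpowers hxy
  have hmem : ∀ x : G, (x ∈ Set.range g ↔
      ∃ hm : IsMaximalCyclic (Subgroup.zpowers x), g ⟨_, hm⟩ = x) := by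
    intro x
    constructor
    · rintro ⟨H, rfl⟩
      have hm : IsMaximalCyclic (Subgroup.zpowers (g H)) := by rw [hg]; exact H.2
      refine ⟨hm, ?_⟩
      congr 1
      apply Subtype.ext
      exact hg H
    · rintro ⟨hm, e⟩
      exact ⟨_, e⟩
  have hgen : ∀ x (hm : IsMaximalCyclic (Subgroup.zpowers x)),
      orderOf x = 2 ∨ orderOf x = 3 ∨ orderOf x = 4 → g ⟨_, hm⟩ = x ∨ g ⟨_, hm⟩ = x⁻¹ := by
    intro x hm hx
    have e : Subgroup.zpowers (g ⟨_, hm⟩) = Subgroup.zpowers x := hg ⟨_, hm⟩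
    apply aux_gen hx
    · exact e.le (Subgroup.mem_zpowers (g ⟨_, hm⟩))
    · rw [← Nat.card_zpowers, e, Nat.card_zpowers]
  have : Fintype {H : Subgroup G // IsMaximalCyclic H} := Fintype.ofFinite _
  refine ⟨(Finset.univ.image g)ᶜ, ?_, ?_, ?_, ?_⟩
  · rw [Finset.card_compl, Finset.card_image_of_injective _ hinj, Finset.card_univ,
      ← Nat.card_eq_fintype_card, ← Nat.card_eq_fintype_card, h]
    unfold lambdaCover
    omega
  · have := hmem 1
    simp only [Finset.mem_compl, Finset.mem_image, Finset.mem_univ, true_and]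
    intro hh
    obtain ⟨hm, -⟩ := this.1 hh
    obtain ⟨y, hy⟩ := h4
    have := (aux_max 1).1 hm y (one_mem _)
    simp [hy] at this
  · intro x hx
    have hm : IsMaximalCyclic (Subgroup.zpowers x) := by
      rw [aux_max]
      intro y hy
      have h1 := hdvd _ _ hy
      have h2 := hle y
      have h3 := hpos y
      obtain ⟨k, hk⟩ := h1
      have : k = 1 := by
        rcases hx with hx | hx <;> rw [hx] at hk <;> omega
      rw [hk, this, mul_one]
    have hne : x ≠ x⁻¹ := by
      intro e
      have : orderOf x ∣ 2 := orderOf_dvd_of_pow_eq_one (by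
        rw [pow_two]; nth_rw 2 [e]; simp)
      have := Nat.le_of_dvd (by norm_num) this
      omega
    have hg2 := hgen x hm (by tauto)
    have e1 : x ∈ Set.range g ↔ g ⟨_, hm⟩ = x :=
      (hmem x).trans ⟨fun ⟨_, e⟩ => e, fun e => ⟨hm, e⟩⟩
    have e2 : x⁻¹ ∈ Set.range g ↔ g ⟨_, hm⟩ = x⁻¹ := by
      rw [hmem]
      have : Subgroup.zpowers x⁻¹ = Subgroup.zpowers x := by simp
      constructor
      · rintro ⟨h1, h2⟩
        rw [← h2]; congr 1; apply Subtype.ext; simp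
      · intro h2
        refine ⟨by rw [this]; exact hm, ?_⟩
        refine Eq.trans ?_ h2
        congr 1; apply Subtype.ext; exact this
    simp only [Set.mem_range] at e1 e2
    simp only [Finset.mem_compl, Finset.mem_image, Finset.mem_univ, true_and]
    rw [e1, e2]
    rcases hg2 with e | e <;> rw [e] <;> simp [hne, hne.symm]
  · intro x hx
    have hinv : x⁻¹ = x := by
      apply inv_eq_of_mul_eq_one_left
      rw [← pow_two, ← hx, pow_orderOf_eq_one]
    have e1 : x ∈ Set.range g ↔ IsMaximalCyclic (Subgroup.zpowers x) := by
      rw [hmem]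
      constructor
      · rintro ⟨h1, -⟩; exact h1
      · intro h1
        refine ⟨h1, ?_⟩
        have := hgen x h1 (by tauto)
        rwa [hinv, or_self] at this
    simp only [Set.mem_range] at e1
    simp only [Finset.mem_compl, Finset.mem_image, Finset.mem_univ, true_and]
    rw [e1, aux_max]
    push Not
    constructor
    · rintro ⟨y, hy, hne⟩
      have h1 := hdvd _ _ hy
      have h2 := hle y
      have h3 := hpos y
      rw [hx] at h1 hne
      have h5 : orderOf y = 4 := by omega
      exact ⟨y, h5, aux_two h5 hx hy⟩
    · rintro ⟨y, hy, rfl⟩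
      exact ⟨y, Subgroup.pow_mem _ (Subgroup.mem_zpowers y) 2, by omega⟩

lemma aux_iso [Finite G] (hcard : Nat.card G = 8) (x y : G) (hx : orderOf x = 4)
    (hyy : y * y = x * x) (hyx : x * y = y * x⁻¹) : Nonempty (G ≃* QuaternionGroup 2) := by
  have hx4 : x ^ 4 = 1 := hx ▸ pow_orderOf_eq_one x
  -- powers indexed by `ZMod 4`
  let P : ZMod 4 → G := fun i => x ^ i.val
  have hP : ∀ i j, P (i + j) = P i * P j := by
    intro i j
    show x ^ _ = x ^ _ * x ^ _
    rw [ZMod.val_add, ← pow_add]; have := pow_mod_orderOf x (i.val + j.val); rw [← this]; simp only [hx]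
  have hP0 : P 0 = 1 := by simp [P]
  have hPn : ∀ i, P (-i) = (P i)⁻¹ := by
    intro i
    apply eq_inv_of_mul_eq_one_left
    rw [← hP]; simp [hP0]
  have hPs : ∀ i j, P (i - j) = P i * (P j)⁻¹ := by
    intro i j; rw [sub_eq_add_neg, hP, hPn]
  have hPc : ∀ i j, P i * P j = P j * P i := by
    intro i j; rw [← hP, ← hP, add_comm]
  have hP2 : P 2 = x * x := by
    show x ^ 2 = _
    exact pow_two x
  have hPy : ∀ i, P i * y = y * (P i)⁻¹ := by
    intro i
    have : ∀ n : ℕ, x ^ n * y = y * (x ^ n)⁻¹ := by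
      intro n
      induction n with
      | zero => simp
      | succ n ih =>
        rw [pow_succ, mul_assoc, hyx, ← mul_assoc, ih, mul_assoc, mul_inv_rev]
        congr 1
        exact ((Commute.refl x).pow_left n).inv_inv.eq
    exact this _
  let f : QuaternionGroup 2 →* G :=
    { toFun := fun q => match q with
        | .a i => P i
        | .xa i => y * P i
      map_one' := hP0
      map_mul' := by
        rintro (i | i) (j | j)
        · exact hP i j
        · show y * P (j - i) = P i * (y * P j)
          rw [← mul_assoc, hPy, hPs, ← hPn, mul_assoc, hPc] 
        · show y * P (i + j) = y * P i * P j
          rw [hP, mul_assoc]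
        · show P (2 + j - i) = y * P i * (y * P j)
          have : y * P i * (y * P j) = y * (P i * y) * P j := by group
          rw [this, hPy, ← mul_assoc, hyy, ← hP2, ← hPn, ← hP, ← hP]
          congr 1; ring }
  have hinj : Function.Injective f := by
    rw [injective_iff_map_eq_one]
    rintro (i | i) hi
    · have h1 : x ^ i.val = 1 := hi
      have h2 := orderOf_dvd_of_pow_eq_one h1
      rw [hx] at h2
      have h3 : i.val < 4 := ZMod.val_lt i
      have h4 : i.val = 0 := by omega
      have : i = 0 := (ZMod.val_eq_zero i).1 h4
      rw [this]; rfl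
    · exfalso
      have h1 : y * x ^ i.val = 1 := hi
      have h2 : y = (x ^ i.val)⁻¹ := eq_inv_of_mul_eq_one_left h1
      have h3 : x * y = y * x := by
        rw [h2]; exact ((Commute.refl x).pow_right _).inv_right.eq
      rw [hyx] at h3
      have h4 := mul_left_cancel h3
      have : orderOf x ∣ 2 := orderOf_dvd_of_pow_eq_one (by
        rw [pow_two]; nth_rw 1 [← h4]; simp)
      rw [hx] at this
      omega
  have hb : Function.Bijective f := by
    rw [Nat.bijective_iff_injective_and_card]
    refine ⟨hinj, ?_⟩
    rw [hcard, Nat.card_eq_fintype_card, QuaternionGroup.card]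
  exact ⟨(MulEquiv.ofBijective f hb).symm⟩

lemma aux_B [Fintype G] [DecidableEq G] (z : G) (hz1 : z ≠ 1) (hzc : ∀ g, z * g = g * z)
    (hzz : z * z = 1) (hsq : ∀ g : G, g * g = 1 ∨ g * g = z)
    (hS : (Finset.univ.filter (fun g : G => g * g = z)).card = 6) :
    Nonempty (G ≃* QuaternionGroup 2) := by
  have hz4 : ∀ g : G, g * g = z → orderOf g = 4 := by
    intro g hg
    have := orderOf_eq_prime_pow (p := 2) (n := 1) (x := g)
      (by rw [pow_one, pow_two, hg]; exact hz1)
      (by show g ^ 4 = 1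
          rw [show 4 = 2 * 2 from rfl, pow_mul, pow_two g, hg, pow_two, hzz])
    simpa using this
  have hp : IsPGroup 2 G := by
    intro g
    refine ⟨2, ?_⟩
    show g ^ 4 = 1
    rw [show 4 = 2 * 2 from rfl, pow_mul, pow_two g, pow_two]
    rcases hsq g with e | e <;> rw [e]
    · simp
    · exact hzz
  have : Fact (Nat.Prime 2) := ⟨Nat.prime_two⟩
  obtain ⟨n, hn⟩ := IsPGroup.iff_card.1 hp
  obtain ⟨x, hxS⟩ : (Finset.univ.filter (fun g : G => g * g = z)).Nonempty := by
    rw [← Finset.card_pos]; omega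
  have hx : x * x = z := by simpa using hxS
  have hx4 := hz4 x hx
  have hcomm : ∀ y, x * y = y * x ∨ x * y = y * x * z := by
    intro y
    have e1 : x * (x * y * (x * y)) * y = (x * x) * (y * x) * (y * y) := by group
    rw [hx] at e1
    rcases hsq (x * y) with h1 | h1 <;> rcases hsq y with h2 | h2 <;> rw [h1, h2] at e1
    · right; simpa [hzc (y * x)] using e1
    · left
      rw [hzc (y * x), mul_assoc (y * x), hzz] at e1; simpa using e1
    · left
      rw [← hzc x, hzc (y * x), mul_assoc, hzc, mul_one] at e1
      simpa using e1
    · right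
      rw [← hzc x, mul_assoc, mul_assoc] at e1
      exact mul_left_cancel e1
  -- the commuting part
  have hinvol : ∀ g, x * (x * g) = z * g := by intro g; rw [← mul_assoc, hx]
  have hC : (Finset.univ.filter (fun g : G => x * g = g * x ∧ g * g = z)).card =
      (Finset.univ.filter (fun g : G => x * g = g * x ∧ ¬ g * g = z)).card := by
    apply Finset.card_nbij' (fun g => x * g) (fun g => x⁻¹ * g)
    · intro g hg
      simp only [Finset.coe_filter, Finset.mem_univ, true_and, Set.mem_ofPred_eq] at hg ⊢
      obtain ⟨h1, h2⟩ := hg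
      refine ⟨by rw [mul_assoc x g x, ← h1], ?_⟩
      have : x * g * (x * g) = (x * x) * (g * g) := by
        rw [mul_assoc, ← mul_assoc g, ← h1]; group
      rw [this, h2, hx, hzz]; exact hz1.symm
    · intro g hg
      simp only [Finset.coe_filter, Finset.mem_univ, true_and, Set.mem_ofPred_eq] at hg ⊢
      obtain ⟨h1, h2⟩ := hg
      have h3 : g * g = 1 := (hsq g).resolve_right h2
      refine ⟨by rw [mul_assoc x⁻¹ g x, ← h1]; group, ?_⟩
      have h4 : g * x⁻¹ = x⁻¹ * g := by
        rw [mul_inv_eq_iff_eq_mul, mul_assoc, ← h1]; group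
      have : x⁻¹ * g * (x⁻¹ * g) = (x * x)⁻¹ * (g * g) := by
        rw [mul_assoc, ← mul_assoc g, h4]; group
      rw [this, h3, hx, mul_one]; exact inv_eq_of_mul_eq_one_left hzz
    · intro g _; simp
    · intro g _; simp
  set O := Finset.univ.filter (fun g : G => x * g = g * x ∧ g * g = z) with hO
  set O' := Finset.univ.filter (fun g : G => ¬ x * g = g * x ∧ g * g = z) with hO'
  have hOO : O.card + O'.card = 6 := by
    rw [← hS, ← Finset.card_filter_add_card_filter_not
      (s := Finset.univ.filter (fun g : G => g * g = z)) (fun g : G => x * g = g * x),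
      Finset.filter_filter, Finset.filter_filter]
    simp only [hO, hO', and_comm]
  have hCC : (Finset.univ.filter (fun g : G => x * g = g * x)).card = 2 * O.card := by
    rw [← Finset.card_filter_add_card_filter_not
      (s := Finset.univ.filter (fun g : G => x * g = g * x)) (fun g : G => g * g = z),
      Finset.filter_filter, Finset.filter_filter, ← hC]
    exact (two_mul _).symm
  have hG : (Finset.univ.filter (fun g : G => x * g = g * x)).card +
      (Finset.univ.filter (fun g : G => ¬ x * g = g * x)).card = Nat.card G := by
    rw [Finset.card_filter_add_card_filter_not, Finset.card_univ, Nat.card_eq_fintype_card]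
  have hn5 : n < 5 ∨ 32 ≤ 2 ^ n := by
    by_cases h : n < 5
    · exact .inl h
    · right
      calc 32 = 2 ^ 5 := rfl
        _ ≤ 2 ^ n := Nat.pow_le_pow_right (by norm_num) (by omega)
  by_cases hall : ∀ w, x * w = w * x
  · exfalso
    have h1 : (Finset.univ.filter (fun g : G => ¬ x * g = g * x)).card = 0 := by
      simp [hall]
    have h2 : O'.card = 0 := by
      rw [hO']; simp [hall]
    have h3 : 2 ^ n = 12 := by omega
    rcases hn5 with h | h
    · interval_cases n <;> omega
    · omega
  push Not at hall
  obtain ⟨w, hw⟩ := hall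
  have hw' := (hcomm w).resolve_left hw
  have hD : (Finset.univ.filter (fun g : G => x * g = g * x)).card =
      (Finset.univ.filter (fun g : G => ¬ x * g = g * x)).card := by
    have key : ∀ g, x * (w * g) = w * (x * g) * z := by
      intro g
      rw [← mul_assoc, hw', mul_assoc, hzc]; group
    apply Finset.card_nbij' (fun g => w * g) (fun g => w⁻¹ * g)
    · intro g hg
      simp only [Finset.coe_filter, Finset.mem_univ, true_and, Set.mem_ofPred_eq] at hg ⊢
      rw [key, hg]
      intro h
      apply hz1
      have : w * (g * x) * z = w * (g * x) * 1 := by rw [h]; group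
      exact mul_left_cancel this
    · intro g hg
      simp only [Finset.coe_filter, Finset.mem_univ, true_and, Set.mem_ofPred_eq] at hg ⊢
      have h1 := key (w⁻¹ * g)
      have h2 := (hcomm g).resolve_left hg
      rw [mul_inv_cancel_left, h2] at h1
      have h3 := mul_right_cancel h1
      rw [mul_assoc, h3]; group
    · intro g _; simp
    · intro g _; simp
  have hO'4 : 0 < O'.card → 4 ≤ O'.card := by
    intro h
    obtain ⟨v, hv⟩ := Finset.card_pos.1 h
    simp only [hO', Finset.mem_filter, Finset.mem_univ, true_and] at hv
    have hstep : ∀ v, v ∈ O' → x * v ∈ O' := by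
      intro v hv
      simp only [hO', Finset.mem_filter, Finset.mem_univ, true_and] at hv ⊢
      have h2 := (hcomm v).resolve_left hv.1
      refine ⟨fun h => hv.1 ?_, ?_⟩
      · rw [mul_assoc x v x] at h; exact mul_left_cancel h
      · have : x * v * (x * v) = x * (v * x * v) := by group
        have h3 : v * x = x * v * z := by rw [h2, mul_assoc, hzz, mul_one]
        rw [this, h3, mul_assoc (x * v), hzc, mul_assoc, ← mul_assoc v, hv.2, ← mul_assoc, hx,
          hzz, mul_one] <;> rfl
    have h0 : v ∈ O' := by simp [hO', hv]
    have hpow : ∀ k : ℕ, x ^ k * v ∈ O' := by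
      intro k
      induction k with
      | zero => simpa using h0
      | succ k ih => rw [pow_succ', mul_assoc]; exact hstep _ ih
    have : (Finset.range 4).card ≤ O'.card := by
      apply Finset.card_le_card_of_injOn (fun k => x ^ k * v)
      · intro k _; exact hpow k
      · intro a ha b hb e
        have := mul_right_cancel e
        apply pow_injOn_Iio_orderOf (x := x) _ _ this
        · simpa [hx4] using ha
        · simpa [hx4] using hb
    simpa using this
  have hG8 : Nat.card G = 8 := by
    have h6 : 6 ≤ Nat.card G := by
      rw [← hS, Nat.card_eq_fintype_card]; exact Finset.card_le_univ _
    have h04 : O'.card = 0 ∨ 4 ≤ O'.card := by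
      rcases Nat.eq_zero_or_pos O'.card with h | h
      · exact .inl h
      · exact .inr (hO'4 h)
    rw [hn] at hG h6 ⊢
    clear hn
    rcases hn5 with h | h
    · interval_cases n <;> omega
    · omega
  have : 0 < O'.card := by omega
  obtain ⟨v, hv⟩ := Finset.card_pos.1 this
  simp only [hO', Finset.mem_filter, Finset.mem_univ, true_and] at hv
  apply aux_iso hG8 x v hx4 (by rw [hv.2, hx])
  have h2 := (hcomm v).resolve_left hv.1
  rw [h2, mul_assoc]
  congr 1
  rw [eq_inv_iff_mul_eq_one, mul_assoc, hzc, ← mul_assoc, hx, hzz]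

lemma aux_A (R : Finset G) [DecidableEq G] (hR5 : R.card = 5) (hR1 : 1 ∈ R)
    (hR4 : ∀ x, orderOf x = 3 ∨ orderOf x = 4 → (x ∈ R ↔ x⁻¹ ∉ R))
    (hR2 : ∀ x, orderOf x = 2 → (x ∈ R ↔ ∃ y : G, orderOf y = 4 ∧ y ^ 2 = x))
    (x y : G) (hx : orderOf x = 4) (hy : orderOf y = 4) : x ^ 2 = y ^ 2 := by
  have hsq2 : ∀ t : G, orderOf t = 4 → orderOf (t ^ 2) = 2 := by
    intro t ht
    rw [orderOf_pow' _ (by norm_num), ht]; norm_num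
  have hinv : ∀ t : G, orderOf t = 4 → t⁻¹ ^ 2 = t ^ 2 := by
    intro t ht
    rw [inv_pow]
    apply inv_eq_of_mul_eq_one_left
    rw [← pow_add]; exact orderOf_dvd_iff_pow_eq_one.1 (by rw [ht])
  by_contra hne
  wlog hxR : x ∈ R generalizing x
  · have hh : x⁻¹ ∈ R := by
      by_contra h
      exact hxR ((hR4 x (.inr hx)).2 h)
    exact this x⁻¹ (by simpa using hx) (by rwa [hinv x hx]) hh
  wlog hyR : y ∈ R generalizing y
  · have hh : y⁻¹ ∈ R := by
      by_contra h
      exact hyR ((hR4 y (.inr hy)).2 h)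
    exact this y⁻¹ (by simpa using hy) (by rwa [hinv y hy]) hh
  have hx2 := hsq2 x hx
  have hy2 := hsq2 y hy
  have hsub : ({1, x ^ 2, y ^ 2, x, y} : Finset G) ⊆ R := by
    intro t ht
    simp only [Finset.mem_insert, Finset.mem_singleton] at ht
    rcases ht with rfl | rfl | rfl | rfl | rfl
    · exact hR1
    · exact (hR2 _ hx2).2 ⟨x, hx, rfl⟩
    · exact (hR2 _ hy2).2 ⟨y, hy, rfl⟩
    · exact hxR
    · exact hyR
  have hcard : ({1, x ^ 2, y ^ 2, x, y} : Finset G).card = 5 := by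
    have o1 : orderOf (1 : G) = 1 := orderOf_one
    have a : ∀ s t : G, orderOf s ≠ orderOf t → s ≠ t := fun s t h e => h (by rw [e])
    rw [Finset.card_insert_of_notMem, Finset.card_insert_of_notMem, Finset.card_insert_of_notMem,
      Finset.card_insert_of_notMem, Finset.card_singleton]
    · simp only [Finset.mem_singleton]; rintro rfl; exact hne rfl
    · simp only [Finset.mem_insert, Finset.mem_singleton, not_or]
      exact ⟨a _ _ (by omega), a _ _ (by omega)⟩
    · simp only [Finset.mem_insert, Finset.mem_singleton, not_or]
      exact ⟨hne, a _ _ (by omega), a _ _ (by omega)⟩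
    · simp only [Finset.mem_insert, Finset.mem_singleton, not_or]
      exact ⟨a _ _ (by omega), a _ _ (by omega), a _ _ (by omega), a _ _ (by omega)⟩
  have hReq := Finset.eq_of_subset_of_card_le hsub (by omega)
  have hmem : ∀ t, orderOf t = 4 → t ∈ R → t = x ∨ t = y := by
    intro t ht htR
    rw [← hReq] at htR
    simp only [Finset.mem_insert, Finset.mem_singleton] at htR
    rcases htR with rfl | rfl | rfl | rfl | rfl
    · simp at ht
    · omega
    · omega
    · simp
    · simp
  have hall : ∀ t, orderOf t = 4 → (t = x ∨ t = x⁻¹) ∨ (t = y ∨ t = y⁻¹) := by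
    intro t ht
    by_cases h : t ∈ R
    · rcases hmem t ht h with h | h <;> simp [h]
    · have h' : t⁻¹ ∈ R := by
        by_contra h'
        exact h ((hR4 t (.inr ht)).2 h')
      rcases hmem t⁻¹ (by simpa using ht) h' with h | h <;> simp [← h]
  have hc : x * y ^ 2 * x⁻¹ = y ^ 2 := by
    have h1 : orderOf (x * y * x⁻¹) = 4 := by
      have := orderOf_injective (MulAut.conj x).toMonoidHom (MulAut.conj x).injective y
      simpa [hy] using this
    have h2 : (x * y * x⁻¹) ^ 2 = x * y ^ 2 * x⁻¹ := conj_pow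
    have h3 : x * y ^ 2 * x⁻¹ ≠ x ^ 2 := by
      intro h
      apply hne
      have h5 : y ^ 2 = x⁻¹ * (x * y ^ 2 * x⁻¹) * x := by group
      rw [h5, h]; group
    rw [← h2] at h3 ⊢
    rcases hall _ h1 with (h | h) | (h | h) <;> rw [h] at h3 ⊢
    · exact absurd rfl h3
    · exact absurd (hinv x hx) h3
    · exact hinv y hy
  have hc' : Commute x (y ^ 2) := by
    rw [mul_inv_eq_iff_eq_mul] at hc; exact hc
  have hy4 : (y ^ 2) ^ 2 = 1 := orderOf_dvd_iff_pow_eq_one.1 (by rw [hy2])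
  have ht2 : (x * y ^ 2) ^ 2 = x ^ 2 := by
    rw [hc'.mul_pow, hy4, mul_one]
  have ht : orderOf (x * y ^ 2) = 4 := by
    have := orderOf_eq_prime_pow (p := 2) (n := 1) (x := x * y ^ 2)
      (by rw [pow_one, ht2]; intro h; rw [h] at hx2; simp at hx2)
      (by show (x * y ^ 2) ^ (2 * 2) = 1
          rw [pow_mul, ht2]; exact orderOf_dvd_iff_pow_eq_one.1 (by rw [hx2]))
    simpa using this
  rcases hall _ ht with (h | h) | (h | h)
  · have : y ^ 2 = 1 := by simpa using h
    rw [this] at hy2; simp at hy2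
  · apply hne
    have : y ^ 2 = x⁻¹ ^ 2 := by
      rw [pow_two x⁻¹]; nth_rw 2 [← h]; group
    rw [this, hinv x hx]
  · rw [h] at ht2; exact hne ht2.symm
  · rw [h, hinv y hy] at ht2; exact hne ht2.symm

end aux

theorem lambda_eq_card_sub_five_max_order_four {G : Type*} [Group G] [Finite G]
    (h : Nat.card G = lambdaCover G + 5)
    (h4 : IsGreatest {n | ∃ g : G, orderOf g = n} 4) :
    Nonempty (G ≃* QuaternionGroup 2) := by
  classical
  have : Fintype G := Fintype.ofFinite G
  have hle : ∀ x : G, orderOf x ≤ 4 := fun x => h4.2 ⟨x, rfl⟩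
  obtain ⟨x, hx⟩ := h4.1
  obtain ⟨R, hR5, hR1, hR4, hR2⟩ := aux_R h hle ⟨x, hx⟩
  have hA : ∀ t : G, orderOf t = 4 → t ^ 2 = x ^ 2 := fun t ht =>
    aux_A R hR5 hR1 hR4 hR2 t x ht hx
  have hz2 : orderOf (x ^ 2) = 2 := by
    rw [orderOf_pow' _ (by norm_num), hx]; norm_num
  obtain ⟨z, hz⟩ : ∃ z, z = x ^ 2 := ⟨_, rfl⟩
  rw [← hz] at hA hz2
  have hz1 : z ≠ 1 := by rintro rfl; simp at hz2
  have hzz : z * z = 1 := by rw [← pow_two, ← hz2, pow_orderOf_eq_one]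
  have hzc : ∀ g, z * g = g * z := by
    intro g
    have h1 : orderOf (g * x * g⁻¹) = 4 := by
      have := orderOf_injective (MulAut.conj g).toMonoidHom (MulAut.conj g).injective x
      simpa [hx] using this
    have h2 := hA _ h1
    rw [conj_pow, ← hz, mul_inv_eq_iff_eq_mul] at h2
    exact h2.symm
  have hno3 : ∀ g : G, orderOf g ≠ 3 := by
    intro g hg
    have h1 := Commute.orderOf_mul_eq_mul_orderOf_of_coprime (hzc g : Commute z g)
      (by rw [hz2, hg]; norm_num)
    have := hle (z * g)
    rw [h1, hz2, hg] at this
    omega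
  have hord : ∀ g : G, orderOf g = 1 ∨ orderOf g = 2 ∨ orderOf g = 4 := by
    intro g
    have h1 := hle g
    have h2 := orderOf_pos g
    have h3 := hno3 g
    omega
  have hsq : ∀ g : G, g * g = 1 ∨ g * g = z := by
    intro g
    rcases hord g with h | h | h
    · left; rw [orderOf_eq_one_iff] at h; simp [h]
    · left; rw [← pow_two, ← h, pow_orderOf_eq_one]
    · right; rw [← pow_two, hA g h]
  have hS4 : ∀ g : G, g * g = z ↔ orderOf g = 4 := by
    intro g
    refine ⟨fun e => ?_, fun e => by rw [← pow_two, hA g e]⟩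
    rcases hord g with h | h | h
    · rw [orderOf_eq_one_iff] at h; rw [h] at e; simp at e; exact absurd e.symm hz1
    · exfalso; apply hz1; rw [← e, ← pow_two, ← h, pow_orderOf_eq_one]
    · exact h
  apply aux_B z hz1 hzc hzz hsq
  have hReq : R = insert 1 (insert z (R.filter (fun g => orderOf g = 4))) := by
    ext t
    simp only [Finset.mem_insert, Finset.mem_filter]
    constructor
    · intro ht
      rcases hord t with h | h | h
      · left; exact orderOf_eq_one_iff.1 h
      · right; left
        obtain ⟨y, hy, rfl⟩ := (hR2 t h).1 ht
        exact hA y hy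
      · tauto
    · rintro (rfl | rfl | h)
      · exact hR1
      · exact (hR2 _ hz2).2 ⟨x, hx, hz.symm⟩
      · exact h.1
  have h3 : (R.filter (fun g => orderOf g = 4)).card = 3 := by
    have := congrArg Finset.card hReq
    rw [Finset.card_insert_of_notMem, Finset.card_insert_of_notMem, hR5] at this
    · omega
    · simp [hz2]
    · simp [hz1.symm]
  have h3' : (Finset.univ.filter (fun g : G => orderOf g = 4 ∧ ¬ g ∈ R)).card = 3 := by
    rw [← h3]
    apply Finset.card_nbij' (fun g => g⁻¹) (fun g => g⁻¹)
    · intro g hg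
      simp only [Finset.coe_filter, Finset.mem_univ, true_and, Set.mem_ofPred_eq] at hg ⊢
      have := hR4 g (.inr hg.1)
      refine ⟨by_contra fun h => hg.2 (this.2 h), by simpa using hg.1⟩
    · intro g hg
      simp only [Finset.coe_filter, Finset.mem_univ, true_and, Set.mem_ofPred_eq] at hg ⊢
      have := hR4 g (.inr hg.2)
      exact ⟨by simpa using hg.2, this.1 hg.1⟩
    · intro g _; simp
    · intro g _; simp
  simp only [hS4]
  rw [← Finset.card_filter_add_card_filter_not (fun g : G => g ∈ R),
    Finset.filter_filter, Finset.filter_filter, h3']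
  have : Finset.univ.filter (fun g : G => orderOf g = 4 ∧ g ∈ R) =
      R.filter (fun g => orderOf g = 4) := by
    ext t; simp [and_comm]
  rw [this, h3]
end

section
/- Let G be a finite group with λ(G) = |G| − 5. Then the maximum order of an element of G is 3, 4, or 6; in particular G has no element of order 5 and no element of order greater than 6. -/
open Subgroup in
theorem setupN {G : Type*} [Group G] [Finite G] (h : Nat.card G = lambdaCover G + 5) :
    ∃ N : Set G, N.ncard = 5 ∧ (∀ x y, x ∉ N → y ∉ N → zpowers x = zpowers y → x = y) ∧
      (∀ x, x ∉ N → IsMaximalCyclic (zpowers x)) ∧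
      (∀ H : Subgroup G, IsMaximalCyclic H → ∃ x, x ∉ N ∧ zpowers x = H) := by
  have hex : ∀ H : {H : Subgroup G // IsMaximalCyclic H}, ∃ g : G, zpowers g = H.1 := by
    intro H
    exact (Subgroup.isCyclic_iff_exists_zpowers_eq_top H.1).1 H.2.1
  choose s hs using hex
  have hinj : Function.Injective s := by
    intro A B hAB
    apply Subtype.ext
    rw [← hs A, ← hs B, hAB]
  refine ⟨(Set.range s)ᶜ, ?_, ?_, ?_, ?_⟩
  · have h1 := Set.ncard_add_ncard_compl (Set.range s)
    have h2 : (Set.range s).ncard = lambdaCover G := by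
      rw [← Nat.card_coe_set_eq, Nat.card_range_of_injective hinj, lambdaCover]
    omega
  · intro x y hx hy hxy
    simp only [Set.mem_compl_iff, not_not] at hx hy
    obtain ⟨A, rfl⟩ := hx
    obtain ⟨B, rfl⟩ := hy
    rw [hs, hs] at hxy
    rw [Subtype.ext hxy]
  · intro x hx
    simp only [Set.mem_compl_iff, not_not] at hx
    obtain ⟨A, rfl⟩ := hx
    rw [hs]; exact A.2
  · intro H hH
    exact ⟨s ⟨H, hH⟩, by simp, hs _⟩

open Subgroup in
theorem max_order_of_lambda_eq_card_sub_five {G : Type*} [Group G] [Finite G]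
    [Nontrivial G] (h : Nat.card G = lambdaCover G + 5)
    (m : ℕ) (hm : IsGreatest {n | ∃ g : G, orderOf g = n} m) :
    m = 3 ∨ m = 4 ∨ m = 6 := by
  obtain ⟨N, hN, huniq, hmax, hgen⟩ := setupN h
  obtain ⟨⟨g, hg⟩, hub⟩ := hm
  have hle : ∀ x : G, orderOf x ≤ m := fun x => hub ⟨x, rfl⟩
  -- subgroup equality from orders
  have heq : ∀ x y : G, zpowers x ≤ zpowers y → orderOf y ≤ orderOf x →
      zpowers x = zpowers y := by
    intro x y hxy ho
    apply Subgroup.eq_of_le_of_card_ge hxy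
    rw [Nat.card_zpowers, Nat.card_zpowers]; exact ho
  have hismax : ∀ x : G, (∀ y, zpowers x ≤ zpowers y → zpowers x = zpowers y) →
      IsMaximalCyclic (zpowers x) := by
    intro x hx
    refine ⟨inferInstance, fun K hK hxK => ?_⟩
    obtain ⟨y, rfl⟩ := (Subgroup.isCyclic_iff_exists_zpowers_eq_top K).1 hK
    exact hx y hxK
  have hinv : ∀ x : G, x ≠ x⁻¹ → x ∈ N ∨ x⁻¹ ∈ N := by
    intro x hx
    by_contra hc
    push Not at hc
    exact hx (huniq _ _ hc.1 hc.2 (by rw [zpowers_inv]))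
  have hgm : IsMaximalCyclic (zpowers g) :=
    hismax g fun y hy => heq _ _ hy (by rw [hg]; exact hle y)
  obtain ⟨c, hcN, hc⟩ := hgen _ hgm
  -- the intersection of zpowers g with N
  have hCN : ((zpowers g : Set G) ∩ N) = (zpowers g : Set G) \ {c} := by
    ext x
    simp only [Set.mem_inter_iff, SetLike.mem_coe, Set.mem_sdiff, Set.mem_singleton_iff]
    constructor
    · rintro ⟨h1, h2⟩
      exact ⟨h1, fun h3 => hcN (h3 ▸ h2)⟩
    · rintro ⟨h1, h2⟩
      refine ⟨h1, by_contra fun h3 => h2 ?_⟩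
      apply huniq _ _ h3 hcN
      rw [hc]
      exact (hmax x h3).2 _ inferInstance (by rwa [zpowers_le])
  have hcard : ((zpowers g : Set G) ∩ N).ncard + 1 = m := by
    rw [hCN, Set.ncard_sdiff_singleton_add_one (by rw [← hc]; exact mem_zpowers c),
      ← hg, ← Nat.card_zpowers]
    rfl
  have hcard2 := Set.ncard_inter_add_ncard_sdiff_eq_ncard N (zpowers g : Set G)
  rw [Set.inter_comm, hN] at hcard2
  have hm0 : 3 ≤ m := by
    by_contra hlt
    have hsub : N ⊆ {1} := by
      intro x hx
      by_contra hx1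
      simp only [Set.mem_singleton_iff] at hx1
      have h2 : ∀ y : G, y ≠ 1 → orderOf y = 2 := by
        intro y hy
        have := hle y
        have := orderOf_pos y
        have : orderOf y ≠ 1 := fun h => hy (orderOf_eq_one_iff.1 h)
        omega
      obtain ⟨y, hy, hyx⟩ := hgen _ (hismax x fun y hy => heq _ _ hy (by
        rw [h2 x hx1]; have := hle y; omega))
      have hmem : x ∈ zpowers y := by rw [hyx]; exact mem_zpowers x
      obtain ⟨k, rfl⟩ := hmem
      have hy1 : y ≠ 1 := by rintro rfl; simp at hx1
      have hy2 : y ^ (2:ℤ) = 1 := by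
        have := pow_orderOf_eq_one y
        rw [h2 y hy1] at this
        exact_mod_cast this
      rcases Int.even_or_odd' k with ⟨j, rfl | rfl⟩
      · simp [zpow_mul, hy2] at hx1
      · apply hy
        simpa [zpow_add, zpow_mul, hy2] using hx
    have := Set.ncard_le_ncard hsub
    rw [hN, Set.ncard_singleton] at this
    omega
  suffices m ≠ 5 by omega
  rintro rfl
  have h1 : (N \ (zpowers g : Set G)).ncard = 1 := by omega
  obtain ⟨n, hn⟩ := Set.ncard_eq_one.1 h1
  have hnN : n ∈ N ∧ n ∉ zpowers g := by
    have : n ∈ N \ (zpowers g : Set G) := by rw [hn]; rfl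
    exact this
  have hone : ∀ x, x ∈ N → x ∉ zpowers g → x = n := by
    intro x hx hx'
    have : x ∈ N \ (zpowers g : Set G) := ⟨hx, hx'⟩
    rw [hn] at this
    exact this
  have hkey : ∀ x, x ∉ zpowers g → x ≠ x⁻¹ → x = n ∨ x⁻¹ = n := by
    intro x hx hx'
    rcases hinv x hx' with h | h
    · exact Or.inl (hone _ h hx)
    · exact Or.inr (hone _ h (by rwa [inv_mem_iff]))
  have hn1 : n ≠ 1 := by rintro rfl; exact hnN.2 (one_mem _)
  have self_inv : ∀ x : G, x = x⁻¹ → x ≠ 1 → orderOf x = 2 := by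
    intro x hx hx1
    apply orderOf_eq_prime _ hx1
    rw [pow_two]; nth_rewrite 1 [hx]; simp
  by_cases hninv : n = n⁻¹
  · -- order two
    have ho := self_inv n hninv hn1
    have hmaxn : IsMaximalCyclic (zpowers n) := by
      apply hismax
      intro y hy
      have hny : n ∈ zpowers y := hy (mem_zpowers n)
      have hyC : y ∉ zpowers g := fun h => hnN.2 ((zpowers_le.2 h) hny)
      by_cases hyi : y = y⁻¹
      · have hy1 : y ≠ 1 := by rintro rfl; exact hyC (one_mem _)
        exact heq _ _ hy (by rw [ho, self_inv y hyi hy1])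
      · rcases hkey y hyC hyi with h | h
        · rw [h]
        · rw [← h, zpowers_inv]
    obtain ⟨y, hyN, hy⟩ := hgen _ hmaxn
    have hyo : orderOf y = 2 := by rw [← Nat.card_zpowers, hy, Nat.card_zpowers, ho]
    have hyC : y ∉ zpowers g := fun h => hnN.2 ((zpowers_le.2 h) (by rw [hy]; exact mem_zpowers n))
    have hmem : n ∈ zpowers y := by rw [hy]; exact mem_zpowers n
    obtain ⟨k, hk⟩ := hmem
    have hy2 : y ^ (2:ℤ) = 1 := by
      have := pow_orderOf_eq_one y
      rw [hyo] at this
      exact_mod_cast this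
    simp only at hk
    rcases Int.even_or_odd' k with ⟨j, rfl | rfl⟩
    · apply hn1; rw [← hk]; simp [zpow_mul, hy2]
    · apply hyN
      have : y = n := by rw [← hk]; simp [zpow_add, zpow_mul, hy2]
      rw [this]; exact hnN.1
  · have hw : g * n * g⁻¹ = n ∨ (g * n * g⁻¹)⁻¹ = n := by
      apply hkey
      · intro hmem
        apply hnN.2
        have := mul_mem (mul_mem (inv_mem (mem_zpowers g)) hmem) (mem_zpowers g)
        simpa [mul_assoc] using this
      · intro he
        apply hninv
        simpa [mul_assoc] using he
    have hcomm : Commute (g ^ 2) n := by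
      rcases hw with h | h
      · have : Commute g n := by
          rw [commute_iff_eq]; exact mul_inv_eq_iff_eq_mul.1 h
        exact this.pow_left 2
      · have h' : g * n * g⁻¹ = n⁻¹ := by rw [← inv_inv (g * n * g⁻¹), h]
        have h'' : g * n⁻¹ * g⁻¹ = n := by rw [← conj_inv, h', inv_inv]
        rw [commute_iff_eq]
        apply mul_inv_eq_iff_eq_mul.1
        calc g ^ 2 * n * (g ^ 2)⁻¹ = g * (g * n * g⁻¹) * g⁻¹ := by simp [pow_two, mul_assoc]
          _ = n := by rw [h', h'']
    have hg2 : orderOf (g ^ 2) = 5 := by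
      rw [Nat.Coprime.orderOf_pow (by rw [hg]; norm_num), hg]
    have hno := orderOf_pos n
    have hno1 : orderOf n ≠ 1 := fun h => hn1 (orderOf_eq_one_iff.1 h)
    have hn5 : orderOf n = 5 := by
      by_contra h5
      have hlt : orderOf n < 5 := lt_of_le_of_ne (hle n) h5
      have hcop : (orderOf (g ^ 2)).Coprime (orderOf n) := by
        rw [hg2]
        exact (Nat.coprime_of_lt_prime (by omega) hlt (by norm_num))
      have := hcomm.orderOf_mul_eq_mul_orderOf_of_coprime hcop
      have h6 := hle (g ^ 2 * n)
      rw [this, hg2] at h6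
      omega
    have hp : n ^ 5 = 1 := by rw [← hn5]; exact pow_orderOf_eq_one n
    have hnd : ∀ k : ℕ, 0 < k → k < 5 → n ^ k ≠ 1 := fun k hk hk5 =>
      pow_ne_one_of_lt_orderOf hk.ne' (by omega)
    rcases hkey (n ^ 2) (by
      intro hmem
      apply hnN.2
      have h3 := pow_mem hmem 3
      rw [← pow_mul] at h3
      have : n ^ (2 * 3) = n := by
        rw [show 2 * 3 = 5 + 1 by norm_num, pow_add, hp]; simp
      rwa [this] at h3) (by
      intro he
      apply hnd 4 (by norm_num) (by norm_num)
      rw [show 4 = 2 + 2 by norm_num, pow_add]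
      nth_rewrite 1 [he]
      simp) with h | h
    · apply hn1
      rw [pow_two] at h
      simpa using h
    · apply hnd 3 (by norm_num) (by norm_num)
      rw [pow_succ]
      nth_rewrite 2 [← h]
      simp
end
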